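/- arXiv:2405.09872 — 2 statements merged into one kernel-verified Lean document; each statement's English description precedes it below -/
import Mathlib

section
/- For any integer n ≥ 3, any real k with 0 < k ≤ n-2, any r > 0, and any y ∈ ℝⁿ with |y| > 0, the average over the sphere ∂B_r(0) of (|y|/|x-y|)^k is at most 1, i.e. (1/|∂B_r(0)|) ∫_{∂B_r(0)} (|y|/|x-y|)^k dσ(x) ≤ 1. -/
open MeasureTheory Filter

noncomputable section

/-- Euclidean space ℝⁿ. -/
abbrev E (n : ℕ) := EuclideanSpace ℝ (Fin n)

/-- Volume of the standard unit n-sphere `|𝕊ⁿ|`. -/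
noncomputable def sphereVol (n : ℕ) : ℝ :=
  (μH[(n : ℝ)] (Metric.sphere (0 : E (n + 1)) 1)).toReal

/-- The Euclidean Laplacian of `u` at `x`. -/
noncomputable def lap {n : ℕ} (u : E n → ℝ) (x : E n) : ℝ :=
  ∑ i : Fin n, fderiv ℝ (fun y => fderiv ℝ u y (EuclideanSpace.single i 1)) x
    (EuclideanSpace.single i 1)

/-- `u` is a normal solution with Q-curvature `Q`. -/
def IsNormal (n : ℕ) (u Q : E n → ℝ) : Prop :=
  ∃ C : ℝ, ∀ x, u x =
    (2 / (Nat.factorial (n - 1) * sphereVol n)) *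
      ∫ y, Real.log (‖y‖ / ‖x - y‖) * (Q y * Real.exp (n * u y)) + C

/-- The constant `α₀`. -/
noncomputable def alpha0 (n : ℕ) (u Q : E n → ℝ) : ℝ :=
  (2 / (Nat.factorial (n - 1) * sphereVol n)) * ∫ y, Q y * Real.exp (n * u y)

/-- Scalar curvature of the conformal metric `e^{2u}|dx|²`. -/
noncomputable def Rg (n : ℕ) (u : E n → ℝ) (x : E n) : ℝ :=
  2 * (n - 1) * Real.exp (-2 * u x) *
    (-(lap u x) - (n - 2) / 2 * ‖gradient u x‖ ^ 2)

open Set Metric Topology Module InnerProductSpace Laplacian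

open scoped RealInnerProductSpace ENNReal

/-!
The rotations generated by skew-adjoint operators give, on integrating over the sphere, the
divergence theorem for tangential fields. Applied to the gradient of a superharmonic `f` at `s • x`,
it says that `M s = ∫ f (s • x)` satisfies `s M'' + (n - 1) M' ≤ 0`, i.e. `s ^ (n - 1) M'` is
decreasing; hence so is `M`, which is the mean value inequality `M 1 ≤ M 0`. For
`0 ≤ k ≤ n - 2` the function `x ↦ ‖x - y‖ ^ (-k)` is superharmonic away from `y`, which settles
`r < ‖y‖`. If `‖y‖ < r`, inversion in the sphere moves `y` outside without decreasing the integrand,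
and `‖y‖ = r` follows from Fatou's lemma along `t • y` with `t ↓ 1`.
-/

section Parametric

variable {X : Type*} [TopologicalSpace X] [T2Space X] [MeasurableSpace X]
  [OpensMeasurableSpace X]

theorem hasDerivAt_setIntegral_of_isCompact {μ : Measure X} {K : Set X} (hK : IsCompact K)
    (hμK : μ K ≠ ⊤) {U : Set ℝ} (hU : IsOpen U) {F F' : ℝ → X → ℝ}
    (hF : ∀ t ∈ U, ContinuousOn (F t) K)
    (hF' : ContinuousOn (fun p : ℝ × X => F' p.1 p.2) (U ×ˢ K))
    (hderiv : ∀ t ∈ U, ∀ x ∈ K, HasDerivAt (fun s => F s x) (F' t x) t) {t₀ : ℝ} (ht₀ : t₀ ∈ U) :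
    HasDerivAt (fun t => ∫ x in K, F t x ∂μ) (∫ x in K, F' t₀ x ∂μ) t₀ := by
  have hKm : MeasurableSet K := hK.measurableSet
  obtain ⟨ε, hε, hεU⟩ := Metric.nhds_basis_closedBall.mem_iff.1 (hU.mem_nhds ht₀)
  obtain ⟨C, hC⟩ := ((isCompact_closedBall t₀ ε).prod hK).exists_bound_of_continuousOn
    (hF'.mono (prod_mono_left hεU))
  have hF't₀ : ContinuousOn (F' t₀) K :=
    hF'.comp (f := fun x => (t₀, x)) (by fun_prop) fun x hx => ⟨ht₀, hx⟩
  refine (hasDerivAt_integral_of_dominated_loc_of_deriv_le (bound := fun _ => C)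
    (closedBall_mem_nhds t₀ hε) ?_ ?_ (hF't₀.aestronglyMeasurable hKm) ?_
    (integrableOn_const hμK) ?_).2
  · filter_upwards [hU.mem_nhds ht₀] with t ht using (hF t ht).aestronglyMeasurable hKm
  · exact (hF t₀ ht₀).integrableOn_of_subset_isCompact hK hKm subset_rfl hμK
  · filter_upwards [ae_restrict_mem hKm] with x hx t ht using hC (t, x) ⟨ht, hx⟩
  · filter_upwards [ae_restrict_mem hKm] with x hx t ht using hderiv t (hεU ht) x hx

end Parametric

theorem antitoneOn_of_mul_deriv2_add_deriv_nonpos {φ φ' φ'' : ℝ → ℝ} {a : ℝ} {m : ℕ}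
    (hm : m ≠ 0) (hφ : ∀ s ∈ Icc 0 a, HasDerivAt φ (φ' s) s)
    (hφ' : ∀ s ∈ Icc 0 a, HasDerivAt φ' (φ'' s) s)
    (hle : ∀ s ∈ Icc 0 a, s * φ'' s + m * φ' s ≤ 0) : AntitoneOn φ (Icc 0 a) := by
  have hflux (s : ℝ) (hs : s ∈ Icc 0 a) :
      HasDerivAt (fun s => s ^ m * φ' s) (s ^ (m - 1) * (s * φ'' s + m * φ' s)) s := by
    refine ((hasDerivAt_pow m s).mul (hφ' s hs)).congr_deriv ?_
    rw [← Nat.succ_pred_eq_of_ne_zero hm]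
    simp only [Nat.succ_eq_add_one, add_tsub_cancel_right]
    ring
  have hflux_anti : AntitoneOn (fun s => s ^ m * φ' s) (Icc 0 a) :=
    antitoneOn_of_hasDerivWithinAt_nonpos (convex_Icc 0 a)
      (fun s hs => (hflux s hs).continuousAt.continuousWithinAt)
      (fun s hs => (hflux s (interior_subset hs)).hasDerivWithinAt)
      fun s hs => mul_nonpos_of_nonneg_of_nonpos (pow_nonneg (interior_subset hs).1 _)
        (hle s (interior_subset hs))
  refine antitoneOn_of_hasDerivWithinAt_nonpos (convex_Icc 0 a)
    (fun s hs => (hφ s hs).continuousAt.continuousWithinAt)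
    (fun s hs => (hφ s (interior_subset hs)).hasDerivWithinAt) fun s hs => ?_
  rw [interior_Icc] at hs
  have hflux_nonpos : s ^ m * φ' s ≤ 0 := by
    simpa [hm] using
      hflux_anti (left_mem_Icc.2 (hs.1.trans hs.2).le) (Ioo_subset_Icc_self hs) hs.1.le
  exact nonpos_of_mul_nonpos_right hflux_nonpos (pow_pos hs.1 m)

section Dilation

variable {V : Type*} [NormedAddCommGroup V] [NormedSpace ℝ V]

theorem hasDerivAt_smul_right (t : ℝ) (x : V) : HasDerivAt (fun t : ℝ => t • x) x t := by
  simpa using (hasDerivAt_id t).smul_const x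

variable [MeasurableSpace V] [OpensMeasurableSpace V] {μ : Measure V} {K U : Set V} {T : Set ℝ}

theorem hasDerivAt_setIntegral_smul (hK : IsCompact K) (hμK : μ K ≠ ⊤) (hU : IsOpen U)
    (hT : IsOpen T) (hTK : ∀ s ∈ T, ∀ x ∈ K, s • x ∈ U) {f : V → ℝ} (hf : ContDiffOn ℝ 1 f U)
    {s : ℝ} (hs : s ∈ T) :
    HasDerivAt (fun s : ℝ => ∫ x in K, f (s • x) ∂μ) (∫ x in K, fderiv ℝ f (s • x) x ∂μ) s := by
  refine hasDerivAt_setIntegral_of_isCompact hK hμK hT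
    (F' := fun s x => fderiv ℝ f (s • x) x) (fun t ht => ?_) ?_ (fun t ht x hx => ?_) hs
  · exact hf.continuousOn.comp (by fun_prop) (hTK t ht)
  · exact ((hf.continuousOn_fderiv_of_isOpen hU le_rfl).comp (by fun_prop)
      fun p hp => hTK p.1 hp.1 p.2 hp.2).clm_apply (by fun_prop)
  · have hfx := (hf.differentiableOn_one.differentiableAt
      (hU.mem_nhds (hTK t ht x hx))).hasFDerivAt
    exact hfx.comp_hasDerivAt t (hasDerivAt_smul_right t x)

theorem hasDerivAt_setIntegral_smul_apply (hK : IsCompact K) (hμK : μ K ≠ ⊤) (hU : IsOpen U)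
    (hT : IsOpen T) (hTK : ∀ s ∈ T, ∀ x ∈ K, s • x ∈ U) {X : V → V →L[ℝ] ℝ}
    (hX : ContDiffOn ℝ 1 X U) {s : ℝ} (hs : s ∈ T) :
    HasDerivAt (fun s : ℝ => ∫ x in K, X (s • x) x ∂μ)
      (∫ x in K, fderiv ℝ X (s • x) x x ∂μ) s := by
  refine hasDerivAt_setIntegral_of_isCompact hK hμK hT
    (F' := fun s x => fderiv ℝ X (s • x) x x) (fun t ht => ?_) ?_ (fun t ht x hx => ?_) hs
  · exact (hX.continuousOn.comp (by fun_prop) (hTK t ht)).clm_apply (by fun_prop)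
  · exact (((hX.continuousOn_fderiv_of_isOpen hU le_rfl).comp (by fun_prop)
      fun p hp => hTK p.1 hp.1 p.2 hp.2).clm_apply (by fun_prop)).clm_apply (by fun_prop)
  · have hXx := (hX.differentiableOn_one.differentiableAt
      (hU.mem_nhds (hTK t ht x hx))).hasFDerivAt
    have hXt : HasDerivAt (fun t : ℝ => X (t • x)) (fderiv ℝ X (t • x) x) t :=
      hXx.comp_hasDerivAt t (hasDerivAt_smul_right t x)
    exact (ContinuousLinearMap.apply ℝ ℝ x).hasFDerivAt.comp_hasDerivAt t hXt

end Dilation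

section RieszKernel

variable {V : Type*} [NormedAddCommGroup V] [InnerProductSpace ℝ V]

theorem hasFDerivAt_norm_sub_rpow {x y : V} (hxy : x ≠ y) (a : ℝ) :
    HasFDerivAt (fun x => ‖x - y‖ ^ a) ((a * ‖x - y‖ ^ (a - 2)) • innerSL ℝ (x - y)) x := by
  have hpos : 0 < ‖x - y‖ := norm_pos_iff.2 (sub_ne_zero.2 hxy)
  have hsq : HasFDerivAt (fun x => ‖x - y‖ ^ 2) (2 • innerSL ℝ (x - y)) x := by
    simpa using ((hasFDerivAt_id x).sub_const y).norm_sq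
  have hrpow (z : V) : (‖z - y‖ ^ 2) ^ (a / 2) = ‖z - y‖ ^ a := by
    rw [← Real.rpow_natCast_mul (norm_nonneg _)]
    congr 1
    push_cast
    ring
  simp_rw [← hrpow]
  refine (hsq.rpow_const (.inl (by positivity))).congr_fderiv ?_
  rw [← Real.rpow_natCast_mul hpos.le, ← Nat.cast_smul_eq_nsmul ℝ, smul_smul]
  push_cast
  ring_nf

theorem contDiffAt_norm_sub_rpow {x y : V} (hxy : x ≠ y) (a : ℝ) {m : WithTop ℕ∞} :
    ContDiffAt ℝ m (fun x => ‖x - y‖ ^ a) x :=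
  ((contDiffAt_id.sub contDiffAt_const).norm ℝ (sub_ne_zero.2 hxy)).rpow_const_of_ne
    (norm_ne_zero_iff.2 (sub_ne_zero.2 hxy))

theorem fderiv_fderiv_norm_sub_rpow {x y : V} (hxy : x ≠ y) (a : ℝ) (v : V) :
    fderiv ℝ (fderiv ℝ fun x => ‖x - y‖ ^ a) x v v =
      a * ‖x - y‖ ^ (a - 2) * ‖v‖ ^ 2 + a * (a - 2) * ‖x - y‖ ^ (a - 4) * ⟪x - y, v⟫ ^ 2 := by
  have hgrad : fderiv ℝ (fun x => ‖x - y‖ ^ a) =ᶠ[𝓝 x]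
      fun x => (a * ‖x - y‖ ^ (a - 2)) • innerSL ℝ (x - y) := by
    filter_upwards [isOpen_ne.mem_nhds hxy] with z hz using (hasFDerivAt_norm_sub_rpow hz a).fderiv
  have hhess : HasFDerivAt (fun x => (a * ‖x - y‖ ^ (a - 2)) • innerSL ℝ (x - y)) _ x :=
    ((hasFDerivAt_norm_sub_rpow hxy (a - 2)).const_mul a).smul
      ((innerSL ℝ).hasFDerivAt.comp x ((hasFDerivAt_id x).sub_const y))
  rw [hgrad.fderiv_eq, hhess.fderiv]
  have hvv : innerSL ℝ v v = ‖v‖ ^ 2 := real_inner_self_eq_norm_sq v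
  simp only [add_apply, smul_apply, ContinuousLinearMap.comp_apply, ContinuousLinearMap.id_apply,
    ContinuousLinearMap.smulRight_apply, innerSL_apply_apply ℝ (x - y) v, smul_eq_mul]
  rw [hvv]
  ring_nf

theorem norm_div_norm_sub_eq_div_norm_sub_inversion {r : ℝ} (hr : 0 < r) {x y : V}
    (hx : x ∈ sphere (0 : V) r) (hy : y ≠ 0) :
    ‖y‖ / ‖x - y‖ = r / ‖x - EuclideanGeometry.inversion 0 r y‖ := by
  have hx₀ : x ≠ 0 := ne_of_mem_sphere hx hr.ne'
  have hinv := EuclideanGeometry.dist_inversion_mul_dist_center_eq (R := r) hx₀ hy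
  rw [EuclideanGeometry.inversion_of_mem_sphere hx, mem_sphere.1 hx, dist_zero_right,
    dist_eq_norm, dist_eq_norm] at hinv
  have hy' : ‖y‖ ≠ 0 := norm_ne_zero_iff.2 hy
  rw [← div_eq_iff hy'] at hinv
  rw [← hinv, div_div_eq_mul_div, mul_comm r, mul_div_mul_right _ _ hr.ne']

variable [FiniteDimensional ℝ V]

theorem laplacian_eq_sum_fderiv_fderiv (f : V → ℝ) {ι : Type*} [Fintype ι]
    (b : OrthonormalBasis ι ℝ V) (x : V) :
    Δ f x = ∑ i, fderiv ℝ (fderiv ℝ f) x (b i) (b i) := by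
  simp [InnerProductSpace.laplacian_eq_iteratedFDeriv_orthonormalBasis f b,
    iteratedFDeriv_two_apply]

theorem laplacian_norm_sub_rpow {x y : V} (hxy : x ≠ y) (a : ℝ) :
    Δ (fun x => ‖x - y‖ ^ a) x = a * (a + finrank ℝ V - 2) * ‖x - y‖ ^ (a - 2) := by
  have hpos : 0 < ‖x - y‖ := norm_pos_iff.2 (sub_ne_zero.2 hxy)
  have hsplit : ‖x - y‖ ^ (a - 2) = ‖x - y‖ ^ (a - 4) * ‖x - y‖ ^ 2 := by
    rw [← Real.rpow_add_natCast hpos.ne']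
    congr 1
    push_cast
    ring
  rw [laplacian_eq_sum_fderiv_fderiv _ (stdOrthonormalBasis ℝ V)]
  simp_rw [fderiv_fderiv_norm_sub_rpow hxy, Finset.sum_add_distrib, ← Finset.mul_sum,
    OrthonormalBasis.sum_sq_inner_left, OrthonormalBasis.norm_eq_one]
  simp only [one_pow, Finset.sum_const, Finset.card_univ, Fintype.card_fin, hsplit, nsmul_eq_mul]
  ring

end RieszKernel

section RotationGenerator

variable {V : Type*} [NormedAddCommGroup V] [InnerProductSpace ℝ V]

/-- The generator of the rotations of the oriented plane spanned by `u` and `v`, unit speed when `u`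
and `v` are orthonormal; the flow of this operator is tangent to every sphere about the origin. -/
def rotationGenerator (u v : V) : V →L[ℝ] V :=
  rankOne ℝ v u - rankOne ℝ u v

theorem rotationGenerator_apply (u v x : V) : rotationGenerator u v x = ⟪u, x⟫ • v - ⟪v, x⟫ • u :=
  rfl

/-- With `L` the value of a covector field `X` at `x` and `B` its derivative, the summand is the
derivative of `x ↦ ⟪b i, x⟫ * X x (b j)` along `rotationGenerator (b i) (b j)`. -/
theorem sum_sum_inner_mul_rotationGenerator_add {ι : Type*} [Fintype ι]
    (b : OrthonormalBasis ι ℝ V) (B : V →L[ℝ] V →L[ℝ] ℝ) (L : V →L[ℝ] ℝ) (x : V) :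
    ∑ i, ∑ j, (⟪b i, x⟫ * B (rotationGenerator (b i) (b j) x) (b j) +
      ⟪b i, rotationGenerator (b i) (b j) x⟫ * L (b j)) =
    ‖x‖ ^ 2 * ∑ i, B (b i) (b i) - B x x - ((finrank ℝ V : ℝ) - 1) * L x := by
  classical
  have hnorm : ‖x‖ ^ 2 = ∑ i, ⟪b i, x⟫ ^ 2 := (b.sum_sq_inner_right x).symm
  have hL : L x = ∑ j, ⟪b j, x⟫ * L (b j) := by
    conv_lhs => rw [← b.sum_repr' x]
    simp
  have hB : B x x = ∑ i, ∑ j, ⟪b i, x⟫ * (⟪b j, x⟫ * B (b i) (b j)) := by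
    conv_lhs => rw [← b.sum_repr' x]
    simp only [map_sum, map_smul, _root_.sum_apply, smul_apply, smul_eq_mul, Finset.mul_sum]
    rw [Finset.sum_comm]
    simp only [mul_left_comm]
  rw [hnorm, hL, hB, finrank_eq_card_basis b.toBasis, Finset.sum_mul_sum]
  simp only [rotationGenerator_apply, map_sub, map_smul, sub_apply, smul_apply, smul_eq_mul,
    inner_sub_right, real_inner_smul_right, mul_sub, sub_mul, Finset.sum_add_distrib,
    Finset.sum_sub_distrib, b.inner_eq_ite]
  simp only [mul_ite, mul_one, mul_zero, ite_mul, zero_mul, Finset.sum_ite_eq, Finset.mem_univ,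
    ↓reduceIte, Finset.sum_const, Finset.card_univ, nsmul_eq_mul, Finset.mul_sum, sq, mul_assoc,
    one_mul]
  ring

theorem rotationGenerator_mem_skewAdjoint [FiniteDimensional ℝ V] (u v : V) :
    rotationGenerator u v ∈ skewAdjoint (V →L[ℝ] V) := by
  rw [rotationGenerator, skewAdjoint.mem_iff, ContinuousLinearMap.star_eq_adjoint, map_sub,
    adjoint_rankOne, adjoint_rankOne, neg_sub]

end RotationGenerator

theorem integrableOn_sphere_of_continuousOn {X : Type*} [PseudoMetricSpace X] [ProperSpace X]
    [MeasurableSpace X] [OpensMeasurableSpace X] {μ : Measure X} {c : X} {r : ℝ}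
    (hr : μ (sphere c r) ≠ ⊤) {g : X → ℝ} (hg : ContinuousOn g (sphere c r)) :
    IntegrableOn g (sphere c r) μ :=
  hg.integrableOn_of_subset_isCompact (isCompact_sphere c r) isClosed_sphere.measurableSet
    subset_rfl hr

/-- A measure on an inner product space is invariant under all linear isometries, reflections
included. -/
def IsRotationInvariant {V : Type*} [NormedAddCommGroup V] [InnerProductSpace ℝ V]
    [MeasurableSpace V] (μ : Measure V) : Prop :=
  ∀ R : V ≃ₗᵢ[ℝ] V, MeasurePreserving R μ μ

namespace IsRotationInvariant

variable {V : Type*} [NormedAddCommGroup V] [InnerProductSpace ℝ V] [MeasurableSpace V]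
  [BorelSpace V] {μ : Measure V}

theorem hausdorffMeasure (d : ℝ) : IsRotationInvariant (μH[d] : Measure V) :=
  fun R => R.toIsometryEquiv.measurePreserving_hausdorffMeasure d

theorem setIntegral_sphere_comp (hμ : IsRotationInvariant μ) (R : V ≃ₗᵢ[ℝ] V) (r : ℝ)
    (g : V → ℝ) :
    ∫ x in sphere (0 : V) r, g (R x) ∂μ = ∫ x in sphere (0 : V) r, g x ∂μ := by
  have hpre : R ⁻¹' sphere (0 : V) r = sphere 0 r := by ext x; simp
  simpa only [hpre] using (hμ R).setIntegral_preimage_emb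
    R.toHomeomorph.measurableEmbedding g (sphere (0 : V) r)

variable [FiniteDimensional ℝ V] {r : ℝ}

theorem setIntegral_sphere_fderiv_skewAdjoint (hμ : IsRotationInvariant μ)
    (hr : μ (sphere 0 r) ≠ ⊤) {g : V → ℝ} {g' : V → V →L[ℝ] ℝ}
    (hg : ∀ x ∈ sphere (0 : V) r, HasFDerivAt g (g' x) x) (hg' : ContinuousOn g' (sphere 0 r))
    {A : V →L[ℝ] V} (hA : A ∈ skewAdjoint (V →L[ℝ] V)) :
    ∫ x in sphere (0 : V) r, g' x (A x) ∂μ = 0 := by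
  let _ : NormedAlgebra ℚ (V →L[ℝ] V) := .restrictScalars ℚ ℝ _
  let γ : ℝ → V →L[ℝ] V := fun t => NormedSpace.exp (t • A)
  have hγ_unitary (t : ℝ) : γ t ∈ unitary (V →L[ℝ] V) :=
    NormedSpace.exp_mem_unitary_of_mem_skewAdjoint (skewAdjoint.smul_mem t hA)
  let R (t : ℝ) : V ≃ₗᵢ[ℝ] V := Unitary.linearIsometryEquiv ⟨γ t, hγ_unitary t⟩
  have hγ_mem (t : ℝ) {x : V} (hx : x ∈ sphere (0 : V) r) : γ t x ∈ sphere (0 : V) r :=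
    mem_sphere_zero_iff_norm.2 (((R t).norm_map x).trans (mem_sphere_zero_iff_norm.1 hx))
  have hγ (t : ℝ) : HasDerivAt γ (A * γ t) t := hasDerivAt_exp_smul_const' A t
  have hg_cont : ContinuousOn g (sphere 0 r) :=
    fun x hx => (hg x hx).continuousAt.continuousWithinAt
  have hconst (t : ℝ) : ∫ x in sphere (0 : V) r, g (γ t x) ∂μ = ∫ x in sphere (0 : V) r, g x ∂μ :=
    hμ.setIntegral_sphere_comp (R t) r g
  have hderiv : HasDerivAt (fun t => ∫ x in sphere (0 : V) r, g (γ t x) ∂μ)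
      (∫ x in sphere (0 : V) r, g' (γ 0 x) (A (γ 0 x)) ∂μ) 0 := by
    refine hasDerivAt_setIntegral_of_isCompact (isCompact_sphere 0 r) hr isOpen_univ
      (F' := fun t x => g' (γ t x) (A (γ t x))) (fun t _ => ?_) ?_ (fun t _ x hx => ?_) (mem_univ _)
    · exact hg_cont.comp (by fun_prop) fun x hx => hγ_mem t hx
    · have hflow : Continuous fun p : ℝ × V => γ p.1 p.2 := by fun_prop
      exact (hg'.comp hflow.continuousOn fun p hp => hγ_mem p.1 hp.2).clm_apply
        (A.continuous.comp hflow).continuousOn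
    · have horbit : HasDerivAt (fun s => γ s x) (A (γ t x)) t := by
        simpa using (hγ t).clm_apply (hasDerivAt_const t x)
      exact (hg _ (hγ_mem t hx)).comp_hasDerivAt t horbit
  simp only [hconst] at hderiv
  simpa [γ] using hderiv.unique (hasDerivAt_const 0 _)

theorem setIntegral_sphere_rotationGenerator (hμ : IsRotationInvariant μ)
    (hr : μ (sphere 0 r) ≠ ⊤) {X : V → V →L[ℝ] ℝ} {X' : V → V →L[ℝ] V →L[ℝ] ℝ}
    (hX : ∀ x ∈ sphere (0 : V) r, HasFDerivAt X (X' x) x) (hX' : ContinuousOn X' (sphere 0 r))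
    (u v : V) :
    ∫ x in sphere (0 : V) r, (⟪u, x⟫ * X' x (rotationGenerator u v x) v +
      ⟪u, rotationGenerator u v x⟫ * X x v) ∂μ = 0 := by
  have hX_cont : ContinuousOn X (sphere 0 r) :=
    fun x hx => (hX x hx).continuousAt.continuousWithinAt
  have hderiv (x : V) (hx : x ∈ sphere (0 : V) r) : HasFDerivAt (fun x => ⟪u, x⟫ * X x v)
      (⟪u, x⟫ • (ContinuousLinearMap.apply ℝ ℝ v).comp (X' x) + X x v • innerSL ℝ u) x :=
    (innerSL ℝ u).hasFDerivAt.mul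
      ((ContinuousLinearMap.apply ℝ ℝ v).hasFDerivAt.comp x (hX x hx))
  simpa [mul_comm] using hμ.setIntegral_sphere_fderiv_skewAdjoint hr hderiv (by fun_prop)
    (rotationGenerator_mem_skewAdjoint u v)

theorem setIntegral_sphere_tangentialDivergence (hμ : IsRotationInvariant μ)
    (hr : μ (sphere 0 r) ≠ ⊤) {X : V → V →L[ℝ] ℝ} {X' : V → V →L[ℝ] V →L[ℝ] ℝ}
    (hX : ∀ x ∈ sphere (0 : V) r, HasFDerivAt X (X' x) x) (hX' : ContinuousOn X' (sphere 0 r))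
    {ι : Type*} [Fintype ι] (b : OrthonormalBasis ι ℝ V) :
    ∫ x in sphere (0 : V) r, (‖x‖ ^ 2 * ∑ i, X' x (b i) (b i) - X' x x x -
      ((finrank ℝ V : ℝ) - 1) * X x x) ∂μ = 0 := by
  have hX_cont : ContinuousOn X (sphere 0 r) :=
    fun x hx => (hX x hx).continuousAt.continuousWithinAt
  have hint (i j : ι) : IntegrableOn
      (fun x => ⟪b i, x⟫ * X' x (rotationGenerator (b i) (b j) x) (b j) +
        ⟪b i, rotationGenerator (b i) (b j) x⟫ * X x (b j)) (sphere 0 r) μ :=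
    have hgen : ContinuousOn (fun x => X' x (rotationGenerator (b i) (b j) x)) (sphere 0 r) :=
      hX'.clm_apply (by fun_prop)
    integrableOn_sphere_of_continuousOn hr (((continuousOn_const.inner continuousOn_id).mul
      (hgen.clm_apply continuousOn_const)).add
        ((by fun_prop : ContinuousOn _ _).mul (hX_cont.clm_apply continuousOn_const)))
  simp_rw [← sum_sum_inner_mul_rotationGenerator_add b]
  rw [integral_finsetSum _ fun i _ => integrable_finsetSum _ fun j _ => hint i j]
  refine Finset.sum_eq_zero fun i _ => ?_
  rw [integral_finsetSum _ fun j _ => hint i j]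
  exact Finset.sum_eq_zero fun j _ =>
    hμ.setIntegral_sphere_rotationGenerator hr hX hX' (b i) (b j)

theorem setIntegral_sphere_divergence (hμ : IsRotationInvariant μ)
    (hr : μ (sphere 0 r) ≠ ⊤) {X : V → V →L[ℝ] ℝ} {X' : V → V →L[ℝ] V →L[ℝ] ℝ}
    (hX : ∀ x ∈ sphere (0 : V) r, HasFDerivAt X (X' x) x) (hX' : ContinuousOn X' (sphere 0 r))
    {ι : Type*} [Fintype ι] (b : OrthonormalBasis ι ℝ V) :
    ∫ x in sphere (0 : V) r, X' x x x ∂μ +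
      ((finrank ℝ V : ℝ) - 1) * ∫ x in sphere (0 : V) r, X x x ∂μ =
    r ^ 2 * ∫ x in sphere (0 : V) r, ∑ i, X' x (b i) (b i) ∂μ := by
  have hX_cont : ContinuousOn X (sphere 0 r) :=
    fun x hx => (hX x hx).continuousAt.continuousWithinAt
  have hradial : IntegrableOn (fun x => X x x) (sphere 0 r) μ :=
    integrableOn_sphere_of_continuousOn hr (hX_cont.clm_apply continuousOn_id)
  have hradial' : IntegrableOn (fun x => X' x x x) (sphere 0 r) μ :=
    integrableOn_sphere_of_continuousOn hr
      ((hX'.clm_apply continuousOn_id).clm_apply continuousOn_id)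
  have htrace : IntegrableOn (fun x => r ^ 2 * ∑ i, X' x (b i) (b i)) (sphere 0 r) μ :=
    integrableOn_sphere_of_continuousOn hr (by fun_prop)
  have hdiv := hμ.setIntegral_sphere_tangentialDivergence hr hX hX' b
  have hnorm : EqOn (fun x => ‖x‖ ^ 2 * ∑ i, X' x (b i) (b i) - X' x x x -
        ((finrank ℝ V : ℝ) - 1) * X x x)
      (fun x => r ^ 2 * ∑ i, X' x (b i) (b i) - X' x x x - ((finrank ℝ V : ℝ) - 1) * X x x)
      (sphere 0 r) :=
    fun x hx => by simp only [mem_sphere_zero_iff_norm.1 hx]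
  have htrace_sub : IntegrableOn (fun x => r ^ 2 * ∑ i, X' x (b i) (b i) - X' x x x)
      (sphere 0 r) μ := htrace.sub hradial'
  rw [setIntegral_congr_fun isClosed_sphere.measurableSet hnorm,
    integral_sub htrace_sub (hradial.const_mul _), integral_sub htrace hradial',
    integral_const_mul, integral_const_mul] at hdiv
  linarith

theorem setIntegral_sphere_laplacian_smul (hμ : IsRotationInvariant μ)
    {R s : ℝ} (hr : μ (sphere 0 r) ≠ ⊤) (hs : |s| * r < R) {f : V → ℝ}
    (hf : ContDiffOn ℝ 2 f (ball 0 R)) :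
    s * ∫ x in sphere (0 : V) r, fderiv ℝ (fderiv ℝ f) (s • x) x x ∂μ +
      ((finrank ℝ V : ℝ) - 1) * ∫ x in sphere (0 : V) r, fderiv ℝ f (s • x) x ∂μ =
    s * r ^ 2 * ∫ x in sphere (0 : V) r, Δ f (s • x) ∂μ := by
  have hf' : ContDiffOn ℝ 1 (fderiv ℝ f) (ball 0 R) := hf.fderiv_of_isOpen isOpen_ball le_rfl
  have hmaps : MapsTo (fun x : V => s • x) (sphere 0 r) (ball 0 R) := fun x hx => by
    simpa [norm_smul, mem_sphere_zero_iff_norm.1 hx] using hs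
  have hX (x : V) (hx : x ∈ sphere (0 : V) r) : HasFDerivAt (fun x => fderiv ℝ f (s • x))
      (s • fderiv ℝ (fderiv ℝ f) (s • x)) x := by
    have hd2f := (hf'.differentiableOn_one.differentiableAt
      (isOpen_ball.mem_nhds (hmaps hx))).hasFDerivAt
    exact (hd2f.comp x ((hasFDerivAt_id x).const_smul s)).congr_fderiv (by ext; simp)
  have hX' : ContinuousOn (fun x => fderiv ℝ (fderiv ℝ f) (s • x)) (sphere 0 r) :=
    (hf'.continuousOn_fderiv_of_isOpen isOpen_ball le_rfl).comp (by fun_prop) hmaps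
  have hdiv := hμ.setIntegral_sphere_divergence hr hX (by fun_prop) (stdOrthonormalBasis ℝ V)
  simp only [smul_apply, smul_eq_mul, ← Finset.mul_sum, integral_const_mul,
    ← laplacian_eq_sum_fderiv_fderiv f (stdOrthonormalBasis ℝ V)] at hdiv
  rw [hdiv]
  ring

theorem antitoneOn_setIntegral_sphere_smul (hμ : IsRotationInvariant μ)
    (hdim : 2 ≤ finrank ℝ V) {R : ℝ} (hr₀ : 0 ≤ r) (hr : μ (sphere 0 r) ≠ ⊤) (hrR : r < R)
    {f : V → ℝ} (hf : ContDiffOn ℝ 2 f (ball 0 R)) (hΔ : ∀ x ∈ ball (0 : V) R, Δ f x ≤ 0) :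
    AntitoneOn (fun s : ℝ => ∫ x in sphere (0 : V) r, f (s • x) ∂μ) (Icc 0 1) := by
  let T : Set ℝ := {s | |s| * r < R}
  have hT : IsOpen T := isOpen_lt (by fun_prop) (by fun_prop)
  have hIcc (s : ℝ) (hs : s ∈ Icc 0 1) : |s| * r < R :=
    (mul_le_of_le_one_left hr₀ (abs_le.2 ⟨by linarith [hs.1], hs.2⟩)).trans_lt hrR
  have hTK (s : ℝ) (hs : s ∈ T) (x : V) (hx : x ∈ sphere (0 : V) r) : s • x ∈ ball (0 : V) R := by
    rw [mem_ball_zero_iff, norm_smul, mem_sphere_zero_iff_norm.1 hx]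
    exact hs
  have hf' : ContDiffOn ℝ 1 (fderiv ℝ f) (ball 0 R) := hf.fderiv_of_isOpen isOpen_ball le_rfl
  refine antitoneOn_of_mul_deriv2_add_deriv_nonpos (m := finrank ℝ V - 1) (by lia)
    (fun s hs => hasDerivAt_setIntegral_smul (isCompact_sphere 0 r) hr isOpen_ball hT hTK
      (hf.of_le one_le_two) (hIcc s hs))
    (fun s hs => hasDerivAt_setIntegral_smul_apply (isCompact_sphere 0 r) hr isOpen_ball hT hTK
      hf' (hIcc s hs)) fun s hs => ?_
  rw [Nat.cast_pred (by lia), hμ.setIntegral_sphere_laplacian_smul hr (hIcc s hs) hf]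
  exact mul_nonpos_of_nonneg_of_nonpos (mul_nonneg hs.1 (sq_nonneg r))
    (setIntegral_nonpos isClosed_sphere.measurableSet
      fun x hx => hΔ _ (hTK s (hIcc s hs) x hx))

theorem setIntegral_sphere_le_of_laplacian_nonpos (hμ : IsRotationInvariant μ)
    (hdim : 2 ≤ finrank ℝ V) {R : ℝ} (hr₀ : 0 ≤ r) (hr : μ (sphere 0 r) ≠ ⊤) (hrR : r < R)
    {f : V → ℝ} (hf : ContDiffOn ℝ 2 f (ball 0 R)) (hΔ : ∀ x ∈ ball (0 : V) R, Δ f x ≤ 0) :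
    ∫ x in sphere (0 : V) r, f x ∂μ ≤ μ.real (sphere 0 r) * f 0 := by
  simpa using hμ.antitoneOn_setIntegral_sphere_smul hdim hr₀ hr hrR hf hΔ
    (left_mem_Icc.2 zero_le_one) (right_mem_Icc.2 zero_le_one) zero_le_one

variable {k : ℝ} {y : V}

theorem setIntegral_sphere_div_rpow_le (hμ : IsRotationInvariant μ)
    (hr : μ (sphere 0 r) ≠ ⊤) (hk₀ : 0 ≤ k) (hk : k ≤ (finrank ℝ V : ℝ) - 2) (hr₀ : 0 ≤ r)
    (hry : r < ‖y‖) :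
    ∫ x in sphere (0 : V) r, (‖y‖ / ‖x - y‖) ^ k ∂μ ≤ μ.real (sphere 0 r) := by
  have hy : 0 < ‖y‖ := hr₀.trans_lt hry
  have hdim : 2 ≤ finrank ℝ V := by exact_mod_cast (by linarith : (2 : ℝ) ≤ finrank ℝ V)
  have hne (x : V) (hx : x ∈ ball (0 : V) ‖y‖) : x ≠ y := by
    rintro rfl
    simp at hx
  have hmean := hμ.setIntegral_sphere_le_of_laplacian_nonpos hdim hr₀ hr hry
    (f := fun x => ‖x - y‖ ^ (-k))
    (fun x hx => (contDiffAt_norm_sub_rpow (hne x hx) (-k)).contDiffWithinAt) fun x hx => by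
      rw [laplacian_norm_sub_rpow (hne x hx)]
      exact mul_nonpos_of_nonpos_of_nonneg (mul_nonpos_of_nonpos_of_nonneg (by linarith)
        (by linarith)) (by positivity)
  calc ∫ x in sphere (0 : V) r, (‖y‖ / ‖x - y‖) ^ k ∂μ
      = ‖y‖ ^ k * ∫ x in sphere (0 : V) r, ‖x - y‖ ^ (-k) ∂μ := by
        rw [← integral_const_mul]
        congr 1 with x
        rw [Real.div_rpow hy.le (norm_nonneg _), Real.rpow_neg (norm_nonneg _), div_eq_mul_inv]
    _ ≤ ‖y‖ ^ k * (μ.real (sphere 0 r) * ‖(0 : V) - y‖ ^ (-k)) := by gcongr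
    _ = μ.real (sphere 0 r) := by
        rw [zero_sub, norm_neg, mul_left_comm, ← Real.rpow_add hy, add_neg_cancel, Real.rpow_zero,
          mul_one]

theorem setLIntegral_sphere_div_rpow_le_of_lt_norm
    (hμ : IsRotationInvariant μ) (hr : μ (sphere 0 r) ≠ ⊤) (hk₀ : 0 ≤ k)
    (hk : k ≤ (finrank ℝ V : ℝ) - 2) (hr₀ : 0 ≤ r) (hry : r < ‖y‖) :
    ∫⁻ x in sphere (0 : V) r, ENNReal.ofReal ((‖y‖ / ‖x - y‖) ^ k) ∂μ ≤ μ (sphere 0 r) := by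
  have hcont : ContinuousOn (fun x => (‖y‖ / ‖x - y‖) ^ k) (sphere (0 : V) r) := by
    refine ContinuousOn.rpow_const (continuousOn_const.div (by fun_prop) fun x hx => ?_)
      fun _ _ => .inr hk₀
    rw [norm_ne_zero_iff, sub_ne_zero]
    rintro rfl
    exact hry.ne' (mem_sphere_zero_iff_norm.1 hx)
  have hint : IntegrableOn (fun x => (‖y‖ / ‖x - y‖) ^ k) (sphere (0 : V) r) μ :=
    integrableOn_sphere_of_continuousOn hr hcont
  rw [← ofReal_integral_eq_lintegral_ofReal hint (.of_forall fun x => by positivity)]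
  exact ENNReal.ofReal_le_of_le_toReal
    (hμ.setIntegral_sphere_div_rpow_le hr hk₀ hk hr₀ hry)

theorem setLIntegral_sphere_div_rpow_le_of_norm_lt
    (hμ : IsRotationInvariant μ) (hr : μ (sphere 0 r) ≠ ⊤) (hk₀ : 0 ≤ k)
    (hk : k ≤ (finrank ℝ V : ℝ) - 2) (hy : y ≠ 0) (hry : ‖y‖ < r) :
    ∫⁻ x in sphere (0 : V) r, ENNReal.ofReal ((‖y‖ / ‖x - y‖) ^ k) ∂μ ≤ μ (sphere 0 r) := by
  have hr₀ : 0 < r := (norm_nonneg y).trans_lt hry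
  have hout : r < ‖EuclideanGeometry.inversion 0 r y‖ := by
    rw [← dist_zero_right, EuclideanGeometry.dist_inversion_center, dist_zero_right,
      lt_div_iff₀ (norm_pos_iff.2 hy), sq]
    gcongr
  refine le_trans (setLIntegral_mono' isClosed_sphere.measurableSet fun x hx => ?_)
    (hμ.setLIntegral_sphere_div_rpow_le_of_lt_norm hr hk₀ hk hr₀.le hout)
  rw [norm_div_norm_sub_eq_div_norm_sub_inversion hr₀ hx hy]
  gcongr

theorem setLIntegral_sphere_div_rpow_le_of_norm_eq
    (hμ : IsRotationInvariant μ) (hr : μ (sphere 0 r) ≠ ⊤) (hk₀ : 0 < k)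
    (hk : k ≤ (finrank ℝ V : ℝ) - 2) (hy : y ≠ 0) (hry : ‖y‖ = r) :
    ∫⁻ x in sphere (0 : V) r, ENNReal.ofReal ((‖y‖ / ‖x - y‖) ^ k) ∂μ ≤ μ (sphere 0 r) := by
  let F (t : ℝ) (x : V) : ℝ≥0∞ := ENNReal.ofReal ((‖t • y‖ / ‖x - t • y‖) ^ k)
  have hle_liminf (x : V) :
      ENNReal.ofReal ((‖y‖ / ‖x - y‖) ^ k) ≤ liminf (fun t => F t x) (𝓝[>] 1) := by
    rcases eq_or_ne x y with rfl | hxy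
    · simp [Real.zero_rpow hk₀.ne']
    have hcont : ContinuousAt (fun t => F t x) 1 := by
      refine ENNReal.continuous_ofReal.continuousAt.comp
        (ContinuousAt.rpow_const (ContinuousAt.div (by fun_prop) (by fun_prop) ?_) (.inr hk₀.le))
      simpa [sub_eq_zero] using hxy
    simpa [F] using (hcont.mono_left nhdsWithin_le_nhds).liminf_eq.ge
  have hF_le : ∀ᶠ t in 𝓝[>] 1, ∫⁻ x in sphere (0 : V) r, F t x ∂μ ≤ μ (sphere 0 r) := by
    filter_upwards [self_mem_nhdsWithin] with t (ht : 1 < t)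
    refine hμ.setLIntegral_sphere_div_rpow_le_of_lt_norm hr hk₀.le hk (hry ▸ norm_nonneg y) ?_
    rw [norm_smul, Real.norm_of_nonneg (zero_le_one.trans ht.le), hry]
    exact lt_mul_of_one_lt_left (hry ▸ norm_pos_iff.2 hy) ht
  calc ∫⁻ x in sphere (0 : V) r, ENNReal.ofReal ((‖y‖ / ‖x - y‖) ^ k) ∂μ
      ≤ ∫⁻ x in sphere (0 : V) r, liminf (fun t => F t x) (𝓝[>] 1) ∂μ := lintegral_mono hle_liminf
    _ ≤ liminf (fun t => ∫⁻ x in sphere (0 : V) r, F t x ∂μ) (𝓝[>] 1) :=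
        lintegral_liminf_le' fun t => by fun_prop
    _ ≤ μ (sphere 0 r) := (liminf_le_liminf hF_le).trans_eq (liminf_const _)

theorem setLIntegral_sphere_div_rpow_le (hμ : IsRotationInvariant μ)
    (hr : μ (sphere 0 r) ≠ ⊤) (hk₀ : 0 < k) (hk : k ≤ (finrank ℝ V : ℝ) - 2) (hr₀ : 0 ≤ r)
    (hy : y ≠ 0) :
    ∫⁻ x in sphere (0 : V) r, ENNReal.ofReal ((‖y‖ / ‖x - y‖) ^ k) ∂μ ≤ μ (sphere 0 r) := by
  rcases lt_trichotomy ‖y‖ r with hlt | heq | hgt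
  · exact hμ.setLIntegral_sphere_div_rpow_le_of_norm_lt hr hk₀.le hk hy hlt
  · exact hμ.setLIntegral_sphere_div_rpow_le_of_norm_eq hr hk₀ hk hy heq
  · exact hμ.setLIntegral_sphere_div_rpow_le_of_lt_norm hr hk₀.le hk hr₀ hgt

end IsRotationInvariant

section HausdorffSphere

variable {V : Type*} [NormedAddCommGroup V] [InnerProductSpace ℝ V]

theorem hausdorffMeasure_image_lt_top_of_locallyLipschitz {F W : Type*} [NormedAddCommGroup F]
    [NormedSpace ℝ F] [FiniteDimensional ℝ F] [MeasurableSpace F] [BorelSpace F] [MetricSpace W]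
    [MeasurableSpace W] [BorelSpace W] {f : F → W} (hf : LocallyLipschitz f) {K : Set F}
    (hK : IsCompact K) : μH[(finrank ℝ F : ℝ)] (f '' K) < ⊤ := by
  obtain ⟨C, hC⟩ := (hf.locallyLipschitzOn (s := K)).exists_lipschitzOnWith_of_compact hK
  have : (μH[(finrank ℝ F : ℝ)] : Measure F).IsAddHaarMeasure := isAddHaarMeasure_hausdorffMeasure
  exact (hC.hausdorffMeasure_image_le (Nat.cast_nonneg _)).trans_lt
    (ENNReal.mul_lt_top (by finiteness) hK.measure_lt_top)

variable [FiniteDimensional ℝ V]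

theorem finrank_orthogonal_span_singleton_eq {v : V} (hv : v ≠ 0) :
    (finrank ℝ (ℝ ∙ v)ᗮ : ℝ) = finrank ℝ V - 1 := by
  rw [eq_sub_iff_add_eq', ← Submodule.finrank_add_finrank_orthogonal (ℝ ∙ v),
    finrank_span_singleton hv, Nat.cast_add, Nat.cast_one]

variable [MeasurableSpace V] [BorelSpace V]

theorem hausdorffMeasure_hemisphere_lt_top {v : V} (hv : ‖v‖ = 1) :
    μH[(finrank ℝ V : ℝ) - 1] {x ∈ sphere (0 : V) 1 | ⟪v, x⟫ ≤ 0} < ⊤ := by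
  set H : Set V := {x ∈ sphere (0 : V) 1 | ⟪v, x⟫ ≤ 0}
  have hhalf : IsClosed {x : V | ⟪v, x⟫ ≤ 0} := isClosed_le (by fun_prop) continuous_const
  have hH : IsCompact H := (isCompact_sphere 0 1).inter_right hhalf
  have hproj : IsCompact (stereoToFun v '' H) :=
    hH.image_of_continuousOn (continuousOn_stereoToFun.mono fun x hx => by
      simpa using (hx.2.trans_lt one_pos).ne)
  have hlip : LocallyLipschitz fun w : (ℝ ∙ v)ᗮ => stereoInvFunAux v w :=
    (contDiff_stereoInvFunAux.comp (ℝ ∙ v)ᗮ.subtypeL.contDiff).locallyLipschitz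
  have hsub : H ⊆ (fun w : (ℝ ∙ v)ᗮ => stereoInvFunAux v w) '' (stereoToFun v '' H) := by
    intro x hx
    have hxv : x ≠ v := by
      rintro rfl
      simpa [hv] using hx.2.trans_lt one_pos
    have hinv := stereo_left_inv hv (x := ⟨x, hx.1⟩) hxv
    exact ⟨_, mem_image_of_mem _ hx, congr_arg Subtype.val hinv⟩
  rw [← finrank_orthogonal_span_singleton_eq (v := v) (by rintro rfl; simp at hv)]
  exact (measure_mono hsub).trans_lt (hausdorffMeasure_image_lt_top_of_locallyLipschitz hlip hproj)

theorem hausdorffMeasure_sphere_lt_top [Nontrivial V] {r : ℝ} (hr : 0 ≤ r) :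
    μH[(finrank ℝ V : ℝ) - 1] (sphere (0 : V) r) < ⊤ := by
  have hd : 0 ≤ (finrank ℝ V : ℝ) - 1 := sub_nonneg.2 (Nat.one_le_cast.2 finrank_pos)
  obtain ⟨v, hv⟩ := exists_norm_eq V zero_le_one
  have hcover : sphere (0 : V) 1 ⊆
      {x ∈ sphere (0 : V) 1 | ⟪v, x⟫ ≤ 0} ∪ {x ∈ sphere (0 : V) 1 | ⟪-v, x⟫ ≤ 0} := fun x hx =>
    (le_total ⟪v, x⟫ 0).imp (⟨hx, ·⟩) (⟨hx, by simpa using ·⟩)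
  have hunit : μH[(finrank ℝ V : ℝ) - 1] (sphere (0 : V) 1) < ⊤ :=
    (measure_mono hcover).trans_lt (measure_union_lt_top (hausdorffMeasure_hemisphere_lt_top hv)
      (hausdorffMeasure_hemisphere_lt_top (by rwa [norm_neg])))
  have himage : sphere (0 : V) r = (fun x => r • x) '' sphere 0 1 := by
    rw [image_smul, smul_sphere r 0 zero_le_one]
    simp [abs_of_nonneg hr]
  rw [himage]
  exact ((lipschitzWith_smul r).lipschitzOnWith.hausdorffMeasure_image_le hd).trans_lt
    (ENNReal.mul_lt_top (by finiteness) hunit)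

end HausdorffSphere

theorem stmt_0_general {V : Type*} [NormedAddCommGroup V] [InnerProductSpace ℝ V]
    [FiniteDimensional ℝ V] [MeasurableSpace V] [BorelSpace V] {μ : Measure V} {r k : ℝ} {y : V}
    (hμ : IsRotationInvariant μ) (hr : μ (sphere 0 r) ≠ ⊤) (hk₀ : 0 < k)
    (hk : k ≤ (finrank ℝ V : ℝ) - 2) (hr₀ : 0 ≤ r) (hy : y ≠ 0) :
    IntegrableOn (fun x => (‖y‖ / ‖x - y‖) ^ k) (sphere 0 r) μ ∧
      ⨍ x in sphere (0 : V) r, (‖y‖ / ‖x - y‖) ^ k ∂μ ≤ 1 := by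
  have hle := hμ.setLIntegral_sphere_div_rpow_le hr hk₀ hk hr₀ hy
  have hnonneg (x : V) : 0 ≤ (‖y‖ / ‖x - y‖) ^ k := by positivity
  have hmeas : Measurable fun x : V => (‖y‖ / ‖x - y‖) ^ k := by fun_prop
  refine ⟨⟨hmeas.aestronglyMeasurable, ?_⟩, ?_⟩
  · rw [hasFiniteIntegral_iff_ofReal (.of_forall hnonneg)]
    exact hle.trans_lt hr.lt_top
  · rw [setAverage_eq, integral_eq_lintegral_of_nonneg_ae (.of_forall hnonneg)
      hmeas.aestronglyMeasurable, smul_eq_mul]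
    exact inv_mul_le_one_of_le₀ (ENNReal.toReal_mono hr hle) measureReal_nonneg

/-- the spherical average of `(|y|/|x−y|)^k` is at most 1. -/
theorem stmt_0 (n : ℕ) (hn : 3 ≤ n) (k : ℝ) (hk0 : 0 < k) (hk : k ≤ (n : ℝ) - 2)
    (r : ℝ) (hr : 0 < r) (y : E n) (hy : y ≠ 0) :
    (⨍ x in Metric.sphere (0 : E n) r, (‖y‖ / ‖x - y‖) ^ k ∂μH[(n : ℝ) - 1]) ≤ 1 := by
  have : Nontrivial (E n) := ⟨y, 0, hy⟩
  have hfinrank : finrank ℝ (E n) = n := finrank_euclideanSpace_fin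
  have hfin := hausdorffMeasure_sphere_lt_top (V := E n) hr.le
  rw [hfinrank] at hfin
  exact (stmt_0_general (.hausdorffMeasure _) hfin.ne hk0 (by rwa [hfinrank]) hr.le hy).2
end
end

section
/- Let n ≥ 4 be even and let g = e^{2u}|dx|² be a normal conformal metric on ℝⁿ with finite total Q-curvature. If the scalar curvature satisfies R_g(x) ≥ C|x|^{−p} near infinity for some C > 0 and p ≥ −2, then ((n−1)!|𝕊ⁿ|/2)·max{0, 1 − p/2} ≤ ∫_{ℝⁿ} Q e^{nu} dx ≤ (n−1)!|𝕊ⁿ|. -/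
open MeasureTheory Filter

noncomputable section

/-!
Fix a radial probability density `ψ` on the shell `1 ≤ |x| ≤ 2` and let `V(t)` be the mean of
`u(eᵗ x)` against `ψ`, so that `t` is a logarithmic radius. The mean of `|x|² Δu` is then
`V'' + (n - 2) V'`, and Jensen's inequality turns `R_g ≥ C |x|⁻ᵖ` into the Riccati inequality
`V'' + (n - 2) V' + ((n - 2) / 2) V'² + c exp (2 V + (2 - p) t) ≤ 0` for large `t`. If `u` is
normal, then `V(t) / t → -α`, where `α` is `∫ Q e^{nu}` divided by `(n - 1)! |𝕊ⁿ| / 2`.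

With `m = n - 2` and `k = m / 2`, the inequality makes `V' + m V` eventually bounded above by a
constant, makes `W = exp (k V)` satisfy `(W' + m W)' ≤ 0`, and lets the exponential term dominate
if `2 - p > 2 α`. Since `W > 0`, comparison of the slope `-α` with these bounds gives `0 ≤ α`,
`α ≤ m / k = 2` and `1 - p / 2 ≤ α`.
-/

open Topology Metric Bornology
open scoped Real

section RiccatiInequality

lemma le_add_mul_sub_of_hasDerivAt_le {f f' : ℝ → ℝ} {a s t : ℝ}
    (hf : ∀ x, HasDerivAt f (f' x) x) (h : ∀ x, s ≤ x → f' x ≤ a) (hst : s ≤ t) :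
    f t ≤ f s + a * (t - s) := by
  have hmvt := (convex_Ici s).image_sub_le_mul_sub_of_deriv_le (C := a)
    (fun x _ => (hf x).continuousAt.continuousWithinAt)
    (fun x _ => (hf x).differentiableAt.differentiableWithinAt)
    (fun x hx => (hf x).deriv.trans_le (h x (interior_subset hx)))
    s Set.self_mem_Ici t hst hst
  linarith

lemma exists_eventually_le_add_mul_of_hasDerivAt_le {f f' : ℝ → ℝ} {a : ℝ}
    (hf : ∀ x, HasDerivAt f (f' x) x) (h : ∀ᶠ x in atTop, f' x ≤ a) :
    ∃ A, ∀ᶠ t in atTop, f t ≤ A + a * t := by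
  obtain ⟨s, hs⟩ := eventually_atTop.1 h
  refine ⟨f s - a * s, ?_⟩
  filter_upwards [eventually_ge_atTop s] with t ht
  linarith [le_add_mul_sub_of_hasDerivAt_le hf hs ht]

lemma le_of_tendsto_div_of_eventually_le_add_mul {f : ℝ → ℝ} {a A L : ℝ}
    (hlim : Tendsto (fun t => f t / t) atTop (𝓝 L)) (h : ∀ᶠ t in atTop, f t ≤ A + a * t) :
    L ≤ a := by
  have hline : Tendsto (fun t : ℝ => A / t + a) atTop (𝓝 a) := by
    simpa using (tendsto_const_nhds (x := A)).div_atTop tendsto_id |>.add_const a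
  refine le_of_tendsto_of_tendsto hlim hline ?_
  filter_upwards [h, eventually_gt_atTop 0] with t ht ht₀
  calc f t / t ≤ (A + a * t) / t := by gcongr
    _ = A / t + a := by field_simp

variable {V V₁ V₂ : ℝ → ℝ} {m k : ℝ}

-- `W = exp (k V)` satisfies `(W' + m W)' ≤ 0`; were `W' + m W` ever negative, then `W'` would be
-- bounded away from `0` from there on, and the positive function `W` would become negative.
lemma eventually_neg_div_le_of_riccati_le (hm : 0 < m) (hk : 0 < k)
    (hV : ∀ t, HasDerivAt V (V₁ t) t) (hV₁ : ∀ t, HasDerivAt V₁ (V₂ t) t)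
    (h : ∀ᶠ t in atTop, V₂ t + m * V₁ t + k * V₁ t ^ 2 ≤ 0) :
    ∀ᶠ t in atTop, -(m / k) ≤ V₁ t := by
  obtain ⟨T, hT⟩ := eventually_atTop.1 h
  filter_upwards [eventually_ge_atTop T] with s hs
  by_contra! hlt
  set G : ℝ → ℝ := fun t => rexp (k * V t) * (k * V₁ t + m)
  have hW : ∀ t, HasDerivAt (fun t => rexp (k * V t)) (rexp (k * V t) * (k * V₁ t)) t :=
    fun t => ((hV t).const_mul k).exp
  have hG' : ∀ t, HasDerivAt G
      (k * (rexp (k * V t) * (V₂ t + m * V₁ t + k * V₁ t ^ 2))) t := fun t =>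
    ((hW t).fun_mul (((hV₁ t).const_mul k).add_const m)).congr_deriv (by ring)
  have hGneg : G s < 0 := by
    refine mul_neg_of_pos_of_neg (Real.exp_pos _) ?_
    rw [← neg_div, lt_div_iff₀ hk] at hlt
    linarith
  have hGle : ∀ t, s ≤ t → G t ≤ G s := fun t ht => by
    have hG'le : ∀ x, s ≤ x →
        k * (rexp (k * V x) * (V₂ x + m * V₁ x + k * V₁ x ^ 2)) ≤ 0 := fun x hx =>
      mul_nonpos_of_nonneg_of_nonpos hk.le <|
        mul_nonpos_of_nonneg_of_nonpos (Real.exp_pos _).le (hT x (hs.trans hx))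
    simpa using le_add_mul_sub_of_hasDerivAt_le hG' hG'le ht
  have hWle : ∀ t, s ≤ t → rexp (k * V t) ≤ rexp (k * V s) + G s * (t - s) := fun t ht =>
    le_add_mul_sub_of_hasDerivAt_le hW (fun x hx => by
      have := mul_pos hm (Real.exp_pos (k * V x))
      linarith [hGle x hx]) ht
  have hzero : G s * (rexp (k * V s) / -G s) = -rexp (k * V s) := by
    rw [div_neg, mul_neg, mul_div_cancel₀ _ hGneg.ne]
  have hfar : s ≤ s + rexp (k * V s) / -G s := by
    have := neg_pos.2 hGneg
    exact le_add_of_nonneg_right (by positivity)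
  linarith [hWle _ hfar, Real.exp_pos (k * V (s + rexp (k * V s) / -G s))]

lemma mul_le_of_deriv_add_mul_le {a B L : ℝ}
    (hV : ∀ t, HasDerivAt V (V₁ t) t) (hV₁ : ∀ t, HasDerivAt V₁ (V₂ t) t)
    (hB : ∀ᶠ t in atTop, B ≤ V₁ t) (h : ∀ᶠ t in atTop, V₂ t + m * V₁ t ≤ a)
    (hlim : Tendsto (fun t => V t / t) atTop (𝓝 L)) :
    m * L ≤ a := by
  obtain ⟨A, hA⟩ := exists_eventually_le_add_mul_of_hasDerivAt_le
    (fun t => (hV₁ t).fun_add ((hV t).const_mul m)) h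
  have hmlim : Tendsto (fun t => m * V t / t) atTop (𝓝 (m * L)) := by
    simpa only [mul_div_assoc] using hlim.const_mul m
  refine le_of_tendsto_div_of_eventually_le_add_mul (A := A - B) hmlim ?_
  filter_upwards [hA, hB] with t hAt hBt
  linarith

variable {c q b α : ℝ}

lemma nonneg_and_le_and_le_of_riccati_le (hm : 0 < m) (hk : 0 < k) (hc : 0 < c)
    (hV : ∀ t, HasDerivAt V (V₁ t) t) (hV₁ : ∀ t, HasDerivAt V₁ (V₂ t) t)
    (h : ∀ᶠ t in atTop, V₂ t + m * V₁ t + k * V₁ t ^ 2 + c * rexp (q * V t + b * t) ≤ 0)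
    (hlim : Tendsto (fun t => V t / t) atTop (𝓝 (-α))) :
    0 ≤ α ∧ α ≤ m / k ∧ b ≤ q * α := by
  have hV₁ge : ∀ᶠ t in atTop, -(m / k) ≤ V₁ t :=
    eventually_neg_div_le_of_riccati_le hm hk hV hV₁ <| h.mono fun t ht => by
      linarith [mul_pos hc (Real.exp_pos (q * V t + b * t))]
  have hbound : ∀ t, V₂ t + m * V₁ t + k * V₁ t ^ 2 + c * rexp (q * V t + b * t) ≤ 0 →
      V₂ t + m * V₁ t ≤ -(c * rexp (q * V t + b * t)) := fun t ht => by
    linarith [mul_nonneg hk.le (sq_nonneg (V₁ t))]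
  refine ⟨?_, ?_, ?_⟩
  · have := mul_le_of_deriv_add_mul_le (a := 0) hV hV₁ hV₁ge (h.mono fun t ht =>
      (hbound t ht).trans (neg_nonpos.2 (by positivity))) hlim
    nlinarith
  · obtain ⟨A, hA⟩ := exists_eventually_le_add_mul_of_hasDerivAt_le (fun t => (hV t).fun_neg)
      (hV₁ge.mono fun t ht => neg_le.1 ht)
    refine le_of_tendsto_div_of_eventually_le_add_mul ?_ hA
    simpa only [neg_div, neg_neg] using hlim.neg
  · -- Otherwise the exponential is unbounded, which forces `V` below every line.
    by_contra! hlt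
    have hrate : Tendsto (fun t => q * (V t / t) + b) atTop (𝓝 (q * -α + b)) :=
      (hlim.const_mul q).add_const b
    have hexponent : Tendsto (fun t => q * V t + b * t) atTop atTop := by
      refine (hrate.pos_mul_atTop (by linarith) tendsto_id).congr' ?_
      filter_upwards [eventually_ne_atTop 0] with t ht
      simp only [id]
      field_simp
    have hexp := (Real.tendsto_exp_atTop.comp hexponent).const_mul_atTop hc
    have hsteep : ∀ᶠ t in atTop, V₂ t + m * V₁ t ≤ -(m * (α + 1)) := by
      filter_upwards [h, hexp.eventually_ge_atTop (m * (α + 1))] with t ht hbig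
      exact (hbound t ht).trans (neg_le_neg hbig)
    linarith [mul_le_of_deriv_add_mul_le hV hV₁ hV₁ge hsteep hlim]

end RiccatiInequality

section EulerDeriv

variable {F : Type*} [NormedAddCommGroup F] [NormedSpace ℝ F] {k l : WithTop ℕ∞} {u : F → ℝ}

lemma contDiff_fderiv_apply_const (hu : ContDiff ℝ l u) (hkl : k + 1 ≤ l) (v : F) :
    ContDiff ℝ k fun x => fderiv ℝ u x v :=
  (hu.fderiv_right hkl).clm_apply contDiff_const

lemma continuous_fderiv_apply_const (hu : ContDiff ℝ 1 u) (v : F) :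
    Continuous fun x => fderiv ℝ u x v :=
  (hu.continuous_fderiv one_ne_zero).clm_apply continuous_const

/-- The Euler derivative `x · ∇u` of `u`, i.e. `r ∂u/∂r` in polar coordinates. -/
def eulerDeriv (u : F → ℝ) (x : F) : ℝ :=
  fderiv ℝ u x x

lemma contDiff_eulerDeriv (hu : ContDiff ℝ l u) (hkl : k + 1 ≤ l) : ContDiff ℝ k (eulerDeriv u) :=
  (hu.fderiv_right hkl).clm_apply contDiff_id

lemma continuous_eulerDeriv (hu : ContDiff ℝ 1 u) : Continuous (eulerDeriv u) :=
  (hu.continuous_fderiv one_ne_zero).clm_apply continuous_id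

lemma eulerDeriv_mul {w : F → ℝ} {x : F} (hw : DifferentiableAt ℝ w x)
    (hu : DifferentiableAt ℝ u x) :
    eulerDeriv (fun y => w y * u y) x = eulerDeriv w x * u x + w x * eulerDeriv u x := by
  simp only [eulerDeriv, fderiv_fun_mul hw hu, add_apply, smul_apply, smul_eq_mul]
  ring

lemma eulerDeriv_comp_smul (u : F → ℝ) (c : ℝ) (x : F) :
    eulerDeriv (fun y => u (c • y)) x = eulerDeriv u (c • x) := by
  simp [eulerDeriv, fderiv_comp_smul]

lemma hasCompactSupport_eulerDeriv (hu : HasCompactSupport u) :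
    HasCompactSupport (eulerDeriv u) :=
  (hu.fderiv ℝ).mono fun x hx hzero => hx (by simp [eulerDeriv, hzero])

end EulerDeriv

section DilationMean

lemma integrable_mul_of_continuous {X : Type*} [TopologicalSpace X] [MeasurableSpace X]
    [OpensMeasurableSpace X] {μ : Measure X} [IsFiniteMeasureOnCompacts μ] {u ψ : X → ℝ}
    (hu : Continuous u) (hψ : Continuous ψ) (hc : HasCompactSupport ψ) :
    Integrable (fun x => u x * ψ x) μ :=
  (hu.mul hψ).integrable_of_hasCompactSupport hc.mul_left

variable {F : Type*} [NormedAddCommGroup F] [NormedSpace ℝ F]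

lemma eventually_forall_exp_smul {P : F → Prop} (h : ∀ᶠ x in cobounded F, P x) :
    ∀ᶠ t in atTop, ∀ x : F, 1 ≤ ‖x‖ → P (rexp t • x) := by
  obtain ⟨R, -, hR⟩ := hasBasis_cobounded_norm.eventually_iff.1 h
  filter_upwards [Real.tendsto_exp_atTop.eventually_ge_atTop R] with t ht x hx
  refine hR ?_
  rw [Set.mem_ofPred_eq, norm_smul, Real.norm_of_nonneg (Real.exp_pos t).le]
  exact ht.trans (le_mul_of_one_le_right (Real.exp_pos t).le hx)

variable [MeasurableSpace F] {μ : Measure F} {ψ u : F → ℝ}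

/-- The weighted mean `∫ u(eᵗ x) ψ(x) dμ(x)`. For a radial probability density `ψ` it is a smoothed
version of the mean of `u` over the sphere of radius `eᵗ`, so `t` is a logarithmic radius. -/
def dilationMean (μ : Measure F) (ψ u : F → ℝ) (t : ℝ) : ℝ :=
  ∫ x, u (rexp t • x) * ψ x ∂μ

variable [OpensMeasurableSpace F] [IsFiniteMeasureOnCompacts μ]

lemma hasDerivAt_dilationMean (hu : ContDiff ℝ 1 u) (hψ : Continuous ψ)
    (hc : HasCompactSupport ψ) (t : ℝ) :
    HasDerivAt (dilationMean μ ψ u) (dilationMean μ ψ (eulerDeriv u) t) t := by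
  have hcont : ∀ v : F → ℝ, Continuous v → ∀ s : ℝ, Continuous fun x => v (rexp s • x) :=
    fun v hv s => hv.comp (continuous_const_smul _)
  have hE := continuous_eulerDeriv hu
  have hjoint : Continuous fun z : ℝ × F => eulerDeriv u (rexp z.1 • z.2) * ψ z.2 := by
    fun_prop
  obtain ⟨B, hB⟩ := ((isCompact_closedBall t 1).prod hc).exists_bound_of_continuousOn
    hjoint.continuousOn
  refine (hasDerivAt_integral_of_dominated_loc_of_deriv_le
    (F' := fun s x => eulerDeriv u (rexp s • x) * ψ x)
    (bound := (tsupport ψ).indicator fun _ => B) (closedBall_mem_nhds t one_pos)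
    (.of_forall fun s =>
      (integrable_mul_of_continuous (hcont u hu.continuous s) hψ hc).aestronglyMeasurable)
    (integrable_mul_of_continuous (hcont u hu.continuous t) hψ hc)
    (integrable_mul_of_continuous (hcont _ hE t) hψ hc).aestronglyMeasurable
    (.of_forall fun x s hs => ?_) ?_ (.of_forall fun x s _ => ?_)).2
  · by_cases hx : x ∈ tsupport ψ
    · rw [Set.indicator_of_mem hx]
      exact hB (s, x) ⟨hs, hx⟩
    · simp [Set.indicator_of_notMem hx, image_eq_zero_of_notMem_tsupport hx]
  · rw [integrable_indicator_iff (isClosed_tsupport ψ).measurableSet]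
    exact integrableOn_const hc.measure_lt_top.ne
  · exact ((hu.differentiable one_ne_zero _).hasFDerivAt.comp_hasDerivAt s
      ((Real.hasDerivAt_exp s).smul_const x)).mul_const _

end DilationMean

section LogPotential

variable {F : Type*} [NormedAddCommGroup F]

/-- The kernel `log (|y| / |x - y|)` of the normalized logarithmic potential. It takes the junk
value `0` for `y = 0` and for `y = x`. -/
def logKernel (x y : F) : ℝ :=
  Real.log (‖y‖ / ‖x - y‖)

lemma logKernel_eq_sub {x y : F} (hy : y ≠ 0) (hxy : x ≠ y) :
    logKernel x y = Real.log ‖y‖ - Real.log ‖x - y‖ :=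
  Real.log_div (norm_ne_zero_iff.2 hy) (norm_ne_zero_iff.2 (sub_ne_zero.2 hxy))

lemma logKernel_smul_left [NormedSpace ℝ F] {c : ℝ} (hc : c ≠ 0) (x y : F) :
    logKernel (c • x) y = logKernel x (c⁻¹ • y) := by
  have hsub : c • x - y = c • (x - c⁻¹ • y) := by rw [smul_sub, smul_inv_smul₀ hc]
  have hy : ‖y‖ = ‖c‖ * ‖c⁻¹ • y‖ := by rw [← norm_smul, smul_inv_smul₀ hc]
  rw [logKernel, logKernel, hsub, norm_smul, hy, mul_div_mul_left _ _ (norm_ne_zero_iff.2 hc)]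

lemma posLog_norm_sub_le (x y : F) : log⁺ ‖x - y‖ ≤ log⁺ ‖x‖ + log⁺ ‖y‖ + Real.log 2 := by
  simpa [sub_eq_add_neg] using Real.posLog_norm_add_le x (-y)

lemma abs_logKernel_add_posLog_inv_le {x y : F} (hxy : x ≠ y) :
    |logKernel x y + log⁺ ‖y‖⁻¹| ≤ Real.log 2 + log⁺ ‖x‖ + log⁺ ‖x - y‖⁻¹ := by
  have : 0 ≤ Real.log 2 := Real.log_nonneg one_le_two
  have hx := Real.posLog_nonneg (x := ‖x‖)
  have hsub := Real.posLog_nonneg (x := ‖x - y‖⁻¹)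
  rcases eq_or_ne y 0 with rfl | hy
  · simp only [logKernel, norm_zero, zero_div, Real.log_zero, inv_zero, Real.posLog_zero,
      add_zero, abs_zero]
    positivity
  · have hle := posLog_norm_sub_le x y
    have hge : log⁺ ‖y‖ ≤ log⁺ ‖x‖ + log⁺ ‖x - y‖ + Real.log 2 := by
      simpa using posLog_norm_sub_le x (x - y)
    rw [logKernel_eq_sub hy hxy, ← Real.posLog_sub_posLog_inv (x := ‖y‖),
      ← Real.posLog_sub_posLog_inv (x := ‖x - y‖), abs_le]
    constructor <;> linarith

lemma posLog_le_abs_log (r : ℝ) : log⁺ r ≤ |Real.log r| :=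
  max_le (abs_nonneg _) (le_abs_self _)

lemma posLog_inv_norm_le_abs_logKernel_add {x : F} (hx : x ≠ 0) (y : F) :
    log⁺ ‖y‖⁻¹ ≤ |logKernel x y| + log⁺ (‖x‖ / 2)⁻¹ := by
  have hx2 : 0 < ‖x‖ / 2 := by have := norm_pos_iff.2 hx; positivity
  rcases le_total (‖x‖ / 2) ‖y‖ with hy | hy
  · exact (Real.posLog_le_posLog (by positivity) (inv_anti₀ hx2 hy)).trans
      (le_add_of_nonneg_left (abs_nonneg _))
  · have hxy : ‖x‖ / 2 ≤ ‖x - y‖ := by linarith [norm_sub_norm_le x y]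
    have hfactor : ‖y‖⁻¹ = (‖y‖ / ‖x - y‖)⁻¹ * ‖x - y‖⁻¹ := by
      have := (hx2.trans_le hxy).ne'
      field_simp
    calc log⁺ ‖y‖⁻¹ ≤ log⁺ (‖y‖ / ‖x - y‖)⁻¹ + log⁺ ‖x - y‖⁻¹ := hfactor ▸ Real.posLog_mul
      _ ≤ |logKernel x y| + log⁺ (‖x‖ / 2)⁻¹ := by
        gcongr
        exact (posLog_le_abs_log _).trans_eq (by rw [logKernel, Real.log_inv, abs_neg])

lemma abs_logKernel_le_one_of_two_mul_norm_lt {x y : F} (h : 2 * ‖x‖ < ‖y‖) :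
    |logKernel x y| ≤ 1 := by
  have hy : 0 < ‖y‖ := lt_of_le_of_lt (by positivity) h
  have hlow : ‖y‖ ≤ 2 * ‖x - y‖ := by linarith [norm_sub_norm_le y x, norm_sub_rev x y]
  have hhigh : ‖x - y‖ ≤ 2 * ‖y‖ := by linarith [norm_sub_le x y, norm_nonneg x]
  have hxy : 0 < ‖x - y‖ := by linarith
  have hlog2 : Real.log 2 ≤ 1 := by linarith [Real.log_two_lt_d9]
  refine le_trans ?_ hlog2
  rw [logKernel, abs_le, ← Real.log_inv]
  constructor
  · refine Real.log_le_log (by norm_num) ?_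
    rw [le_div_iff₀ hxy]
    linarith
  · refine Real.log_le_log (by positivity) ?_
    rwa [div_le_iff₀ hxy]

lemma norm_inv_exp_smul_inv [NormedSpace ℝ F] (t : ℝ) (y : F) :
    ‖(rexp t)⁻¹ • y‖⁻¹ = rexp t * ‖y‖⁻¹ := by
  rw [norm_smul, mul_inv, norm_inv, inv_inv, Real.norm_of_nonneg (Real.exp_pos t).le]

lemma posLog_inv_norm_inv_exp_smul_le [NormedSpace ℝ F] {t : ℝ} (ht : 0 ≤ t) (y : F) :
    log⁺ ‖(rexp t)⁻¹ • y‖⁻¹ ≤ t + log⁺ ‖y‖⁻¹ := by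
  have hexp : log⁺ (rexp t) = t := by rw [Real.posLog, Real.log_exp, max_eq_right ht]
  exact (norm_inv_exp_smul_inv t y ▸ Real.posLog_mul).trans_eq (by rw [hexp])

lemma posLog_inv_norm_inv_exp_smul [NormedSpace ℝ F] {t : ℝ} {y : F} (hy : y ≠ 0)
    (ht : Real.log ‖y‖ ≤ t) : log⁺ ‖(rexp t)⁻¹ • y‖⁻¹ = t - Real.log ‖y‖ := by
  rw [Real.posLog, norm_inv_exp_smul_inv, Real.log_mul (Real.exp_ne_zero t)
    (inv_ne_zero (norm_ne_zero_iff.2 hy)), Real.log_exp, Real.log_inv, ← sub_eq_add_neg,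
    max_eq_right (sub_nonneg.2 ht)]

variable [MeasurableSpace F]

/-- The logarithmic potential `∫ log (|y| / |x - y|) f(y) dμ(y)` of the density `f`. -/
def logPotential (μ : Measure F) (f : F → ℝ) (x : F) : ℝ :=
  ∫ y, logKernel x y * f y ∂μ

lemma logPotential_const_mul (μ : Measure F) (a : ℝ) (f : F → ℝ) (x : F) :
    logPotential μ (fun y => a * f y) x = a * logPotential μ f x := by
  simp_rw [logPotential, mul_left_comm _ a, integral_const_mul]

lemma integral_logKernel_exp_smul_mul [NormedSpace ℝ F] (μ : Measure F) (f ψ : F → ℝ) (t : ℝ)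
    (y : F) :
    ∫ x, logKernel (rexp t • x) y * f y * ψ x ∂μ =
      dilationMean μ ψ (fun x => logKernel x y) t * f y := by
  simp_rw [dilationMean, mul_right_comm _ (f y), integral_mul_const]

variable [BorelSpace F] {μ : Measure F} {f : F → ℝ}

lemma integrable_posLog_inv_norm_mul_of_logKernel (hf : Integrable f μ) {x : F} (hx : x ≠ 0)
    (h : Integrable (fun y => logKernel x y * f y) μ) :
    Integrable (fun y => log⁺ ‖y‖⁻¹ * f y) μ := by
  refine (h.norm.add (hf.norm.const_mul (log⁺ (‖x‖ / 2)⁻¹))).mono' ?_ (.of_forall fun y => ?_)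
  · have : Measurable fun y : F => log⁺ ‖y‖⁻¹ := by fun_prop
    exact this.aestronglyMeasurable.mul hf.1
  · rw [norm_mul, Real.norm_of_nonneg Real.posLog_nonneg, Pi.add_apply, norm_mul, ← add_mul]
    gcongr
    exact posLog_inv_norm_le_abs_logKernel_add hx y

variable [SecondCountableTopology F]

@[fun_prop]
lemma measurable_logKernel_comp {α : Type*} [MeasurableSpace α] {g h : α → F} (hg : Measurable g)
    (hh : Measurable h) : Measurable fun a => logKernel (g a) (h a) := by
  unfold logKernel
  fun_prop

end LogPotential

section LogPotentialGrowth

variable {F : Type*} [NormedAddCommGroup F] [NormedSpace ℝ F] [FiniteDimensional ℝ F]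
  [Nontrivial F] [MeasurableSpace F] [BorelSpace F] {μ : Measure F} [μ.IsAddHaarMeasure]
  {f ψ : F → ℝ}

lemma integrable_posLog_inv_norm : Integrable (fun x : F => log⁺ ‖x‖⁻¹) μ := by
  have hsupport : Function.support (fun x : F => log⁺ ‖x‖⁻¹) ⊆ ball 0 1 := fun x hx => by
    contrapose! hx
    rw [mem_ball_zero_iff, not_lt] at hx
    simpa [Real.posLog_eq_zero_iff] using inv_le_one_of_one_le₀ hx
  rw [← integrableOn_iff_integrable_of_support_subset hsupport,
    integrableOn_fun_norm_addHaar (μ := μ) (f := fun r => log⁺ r⁻¹)]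
  have hlog : IntegrableOn (fun r : ℝ => r ^ (Module.finrank ℝ F - 1) * -Real.log r)
      (Set.Ioo 0 1) :=
    (intervalIntegrable_iff_integrableOn_Ioo_of_le zero_le_one).1 <|
      intervalIntegral.intervalIntegrable_log'.neg.continuousOn_mul (continuous_pow _).continuousOn
  refine hlog.congr_fun (fun r hr => ?_) measurableSet_Ioo
  simp only [smul_eq_mul]
  rw [Real.posLog_eq_log, Real.log_inv]
  rw [abs_inv, abs_of_pos hr.1]
  exact (one_le_inv₀ hr.1).2 hr.2.le

lemma exists_integral_abs_logKernel_add_posLog_inv_mul_le (hψ : Continuous ψ)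
    (hc : HasCompactSupport ψ) :
    ∃ A : ℝ, ∀ z : F, Integrable (fun x => (logKernel x z + log⁺ ‖z‖⁻¹) * ψ x) μ ∧
      ∫ x, |(logKernel x z + log⁺ ‖z‖⁻¹) * ψ x| ∂μ ≤ A := by
  obtain ⟨B, hB⟩ := hc.exists_bound_of_continuous hψ
  have hnear : Integrable (fun x => (Real.log 2 + log⁺ ‖x‖) * |ψ x|) μ :=
    integrable_mul_of_continuous (by fun_prop) hψ.abs hc.abs
  have hpole : ∀ z : F, Integrable (fun x => log⁺ ‖x - z‖⁻¹ * B) μ := fun z =>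
    (integrable_posLog_inv_norm.comp_sub_right z).mul_const B
  refine ⟨∫ x, (Real.log 2 + log⁺ ‖x‖) * |ψ x| ∂μ + ∫ x : F, log⁺ ‖x‖⁻¹ * B ∂μ, fun z => ?_⟩
  have hbound : ∀ᵐ x ∂μ, ‖(logKernel x z + log⁺ ‖z‖⁻¹) * ψ x‖ ≤
      (Real.log 2 + log⁺ ‖x‖) * |ψ x| + log⁺ ‖x - z‖⁻¹ * B := by
    filter_upwards [Measure.ae_ne μ z] with x hx
    calc ‖(logKernel x z + log⁺ ‖z‖⁻¹) * ψ x‖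
        ≤ (Real.log 2 + log⁺ ‖x‖ + log⁺ ‖x - z‖⁻¹) * |ψ x| := by
          rw [norm_mul]
          exact mul_le_mul_of_nonneg_right (abs_logKernel_add_posLog_inv_le hx) (abs_nonneg _)
      _ = (Real.log 2 + log⁺ ‖x‖) * |ψ x| + log⁺ ‖x - z‖⁻¹ * |ψ x| := add_mul _ _ _
      _ ≤ _ := by
        gcongr
        · exact Real.posLog_nonneg
        · exact hB x
  have hint : Integrable (fun x => (logKernel x z + log⁺ ‖z‖⁻¹) * ψ x) μ := by
    refine (hnear.add (hpole z)).mono' (Measurable.aestronglyMeasurable ?_) hbound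
    have := hψ.measurable
    fun_prop
  refine ⟨hint, (integral_mono_ae hint.norm (hnear.add (hpole z)) hbound).trans_eq ?_⟩
  rw [integral_add' hnear (hpole z), integral_sub_right_eq_self (fun x : F => log⁺ ‖x‖⁻¹ * B) z]

lemma exists_integral_abs_logKernel_exp_smul_mul_le (hψ : Continuous ψ)
    (hc : HasCompactSupport ψ) :
    ∃ A : ℝ, ∀ t, 0 ≤ t → ∀ y : F, Integrable (fun x => logKernel (rexp t • x) y * ψ x) μ ∧
      ∫ x, |logKernel (rexp t • x) y * ψ x| ∂μ ≤ A + (t + log⁺ ‖y‖⁻¹) * ∫ x, |ψ x| ∂μ := by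
  obtain ⟨A, hA⟩ := exists_integral_abs_logKernel_add_posLog_inv_mul_le (μ := μ) hψ hc
  have hψi : Integrable ψ μ := hψ.integrable_of_hasCompactSupport hc
  refine ⟨A, fun t ht y => ?_⟩
  obtain ⟨hint, hle⟩ := hA ((rexp t)⁻¹ • y)
  set L := log⁺ ‖(rexp t)⁻¹ • y‖⁻¹
  have hsplit : ∀ x, logKernel (rexp t • x) y * ψ x =
      (logKernel x ((rexp t)⁻¹ • y) + L) * ψ x - L * ψ x := fun x => by
    rw [logKernel_smul_left (Real.exp_ne_zero t)]
    ring
  simp_rw [hsplit]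
  refine ⟨hint.sub (hψi.const_mul L), ?_⟩
  calc ∫ x, |(logKernel x ((rexp t)⁻¹ • y) + L) * ψ x - L * ψ x| ∂μ
      ≤ ∫ x, (|(logKernel x ((rexp t)⁻¹ • y) + L) * ψ x| + L * |ψ x|) ∂μ := by
        refine integral_mono (hint.sub (hψi.const_mul L)).abs
          (hint.abs.add (hψi.abs.const_mul L)) fun x => ?_
        refine (abs_sub _ _).trans_eq ?_
        rw [abs_mul L, abs_of_nonneg (Real.posLog_nonneg : 0 ≤ L)]
    _ = ∫ x, |(logKernel x ((rexp t)⁻¹ • y) + L) * ψ x| ∂μ + L * ∫ x, |ψ x| ∂μ := by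
        rw [integral_add hint.abs (hψi.abs.const_mul L), integral_const_mul]
    _ ≤ A + (t + log⁺ ‖y‖⁻¹) * ∫ x, |ψ x| ∂μ := by
        gcongr
        exact posLog_inv_norm_inv_exp_smul_le ht y

lemma tendsto_dilationMean_logKernel_div (hψ : Continuous ψ) (hc : HasCompactSupport ψ)
    {y : F} (hy : y ≠ 0) :
    Tendsto (fun t => dilationMean μ ψ (fun x => logKernel x y) t / t) atTop
      (𝓝 (-∫ x, ψ x ∂μ)) := by
  obtain ⟨A, hA⟩ := exists_integral_abs_logKernel_add_posLog_inv_mul_le (μ := μ) hψ hc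
  have hψi : Integrable ψ μ := hψ.integrable_of_hasCompactSupport hc
  set P := ∫ x, ψ x ∂μ
  have hbounded : ∀ᶠ t in atTop,
      |dilationMean μ ψ (fun x => logKernel x y) t + (t - Real.log ‖y‖) * P| ≤ A := by
    filter_upwards [eventually_ge_atTop (Real.log ‖y‖)] with t ht
    obtain ⟨hint, hle⟩ := hA ((rexp t)⁻¹ • y)
    rw [posLog_inv_norm_inv_exp_smul hy ht] at hint hle
    refine le_of_eq_of_le (congrArg abs ?_) (abs_integral_le_integral_abs.trans hle)
    rw [← integral_const_mul, ← eq_sub_iff_add_eq, ← integral_sub hint (hψi.const_mul _)]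
    simp_rw [dilationMean, logKernel_smul_left (Real.exp_ne_zero t), add_mul, add_sub_cancel_right]
  have hlim₀ := bdd_le_mul_tendsto_zero' A hbounded tendsto_inv_atTop_zero
  have hlim₁ : Tendsto (fun t => Real.log ‖y‖ * P * t⁻¹) atTop (𝓝 0) := by
    simpa using tendsto_inv_atTop_zero.const_mul (Real.log ‖y‖ * P)
  have hlim : Tendsto (fun t =>
      (dilationMean μ ψ (fun x => logKernel x y) t + (t - Real.log ‖y‖) * P) * t⁻¹ +
        Real.log ‖y‖ * P * t⁻¹ - P) atTop (𝓝 (-P)) := by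
    simpa using (hlim₀.add hlim₁).sub_const P
  refine hlim.congr' ?_
  filter_upwards [eventually_ne_atTop 0] with t ht
  field_simp
  ring

lemma integrable_prod_logKernel_exp_smul_mul (hψ : Continuous ψ) (hc : HasCompactSupport ψ)
    (hf : Integrable f μ) (hlog : Integrable (fun y => log⁺ ‖y‖⁻¹ * f y) μ) {t : ℝ}
    (ht : 0 ≤ t) :
    Integrable (fun z : F × F => logKernel (rexp t • z.1) z.2 * f z.2 * ψ z.1) (μ.prod μ) := by
  obtain ⟨A, hA⟩ := exists_integral_abs_logKernel_exp_smul_mul_le (μ := μ) hψ hc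
  have hmeas : AEStronglyMeasurable
      (fun z : F × F => logKernel (rexp t • z.1) z.2 * f z.2 * ψ z.1) (μ.prod μ) := by
    have hk : Measurable fun z : F × F => logKernel (rexp t • z.1) z.2 := by fun_prop
    exact (hk.aestronglyMeasurable.mul hf.1.comp_snd).mul
      (hψ.comp continuous_fst).aestronglyMeasurable
  rw [integrable_prod_iff' hmeas]
  refine ⟨.of_forall fun y => ?_, ?_⟩
  · simpa only [mul_right_comm] using (hA t ht y).1.mul_const (f y)
  · have hdom : Integrable (fun y =>
        (A + t * ∫ x, |ψ x| ∂μ) * ‖f y‖ + (∫ x, |ψ x| ∂μ) * ‖log⁺ ‖y‖⁻¹ * f y‖) μ :=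
      (hf.norm.const_mul _).add (hlog.norm.const_mul _)
    refine hdom.mono' hmeas.norm.prod_swap.integral_prod_right' (.of_forall fun y => ?_)
    calc ‖∫ x, ‖logKernel (rexp t • x) y * f y * ψ x‖ ∂μ‖
        = (∫ x, |logKernel (rexp t • x) y * ψ x| ∂μ) * ‖f y‖ := by
          rw [Real.norm_of_nonneg (integral_nonneg fun x => norm_nonneg _), ← integral_mul_const]
          simp_rw [mul_right_comm _ (f y), norm_mul _ (f y), Real.norm_eq_abs]
      _ ≤ (A + (t + log⁺ ‖y‖⁻¹) * ∫ x, |ψ x| ∂μ) * ‖f y‖ := by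
          gcongr
          exact (hA t ht y).2
      _ = _ := by
          rw [norm_mul, Real.norm_of_nonneg Real.posLog_nonneg]
          ring

lemma dilationMean_logPotential (hψ : Continuous ψ) (hc : HasCompactSupport ψ)
    (hf : Integrable f μ) (hlog : Integrable (fun y => log⁺ ‖y‖⁻¹ * f y) μ) {t : ℝ}
    (ht : 0 ≤ t) :
    dilationMean μ ψ (logPotential μ f) t =
      ∫ y, dilationMean μ ψ (fun x => logKernel x y) t * f y ∂μ := by
  simp_rw [← integral_logKernel_exp_smul_mul]
  rw [← integral_integral_swap (f := fun x y => logKernel (rexp t • x) y * f y * ψ x)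
    (integrable_prod_logKernel_exp_smul_mul hψ hc hf hlog ht)]
  simp_rw [integral_mul_const, dilationMean, logPotential]

lemma tendsto_dilationMean_logPotential_div (hψ : Continuous ψ) (hc : HasCompactSupport ψ)
    (hf : Integrable f μ) (hlog : Integrable (fun y => log⁺ ‖y‖⁻¹ * f y) μ) :
    Tendsto (fun t => dilationMean μ ψ (logPotential μ f) t / t) atTop
      (𝓝 (-((∫ x, ψ x ∂μ) * ∫ y, f y ∂μ))) := by
  obtain ⟨A, hA⟩ := exists_integral_abs_logKernel_exp_smul_mul_le (μ := μ) hψ hc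
  set P := ∫ x, |ψ x| ∂μ
  have : 0 ≤ P := integral_nonneg fun x => abs_nonneg _
  have hdom : Integrable (fun y => (|A| + P) * ‖f y‖ + P * ‖log⁺ ‖y‖⁻¹ * f y‖) μ :=
    (hf.norm.const_mul _).add (hlog.norm.const_mul _)
  rw [← integral_const_mul, ← integral_neg]
  refine (tendsto_integral_filter_of_dominated_convergence
    (F := fun t y => dilationMean μ ψ (fun x => logKernel x y) t * f y / t)
    _ ?_ ?_ hdom ?_).congr' ?_
  · filter_upwards [eventually_ge_atTop 0] with t ht
    have hprod := integrable_prod_logKernel_exp_smul_mul hψ hc hf hlog ht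
    simpa only [integral_logKernel_exp_smul_mul] using (hprod.integral_prod_right.div_const t).1
  · filter_upwards [eventually_ge_atTop 1] with t ht
    refine .of_forall fun y => ?_
    have ht₀ : 0 < t := one_pos.trans_le ht
    have hℓ : 0 ≤ log⁺ ‖y‖⁻¹ := Real.posLog_nonneg
    have hkernel : |dilationMean μ ψ (fun x => logKernel x y) t| ≤
        (|A| + P + P * log⁺ ‖y‖⁻¹) * t :=
      calc |dilationMean μ ψ (fun x => logKernel x y) t| ≤ A + (t + log⁺ ‖y‖⁻¹) * P :=
            abs_integral_le_integral_abs.trans (hA t ht₀.le y).2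
        _ ≤ |A| * t + (t + log⁺ ‖y‖⁻¹ * t) * P := by
            gcongr
            · exact (le_abs_self A).trans (le_mul_of_one_le_right (abs_nonneg A) ht)
            · exact le_mul_of_one_le_right hℓ ht
        _ = (|A| + P + P * log⁺ ‖y‖⁻¹) * t := by ring
    rw [norm_div, norm_mul, Real.norm_of_nonneg ht₀.le, div_le_iff₀ ht₀, norm_mul (log⁺ _),
      Real.norm_of_nonneg hℓ, Real.norm_eq_abs (dilationMean _ _ _ _)]
    refine (mul_le_mul_of_nonneg_right hkernel (norm_nonneg (f y))).trans_eq ?_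
    ring
  · filter_upwards [Measure.ae_ne μ 0] with y hy
    simpa only [neg_mul, div_mul_eq_mul_div] using
      (tendsto_dilationMean_logKernel_div hψ hc hy).mul_const (f y)
  · filter_upwards [eventually_ge_atTop 0] with t ht
    rw [dilationMean_logPotential hψ hc hf hlog ht, integral_div]

lemma not_integrable_logKernel_mul_add_const (hf : Integrable f μ) (x : F) {K : ℝ} (hK : K ≠ 0) :
    ¬ Integrable (fun y => logKernel x y * f y + K) μ := fun h => by
  set S : Set F := (closedBall 0 (2 * ‖x‖))ᶜ
  have hpot : IntegrableOn (fun y => logKernel x y * f y) S μ := by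
    refine (hf.norm.integrableOn (s := S)).mono' ?_ ?_
    · have hk : Measurable fun y : F => logKernel x y := by fun_prop
      exact (hk.aestronglyMeasurable.mul hf.1).restrict
    · filter_upwards [ae_restrict_mem measurableSet_closedBall.compl] with y hy
      rw [Set.mem_compl_iff, mem_closedBall_zero_iff, not_le] at hy
      rw [norm_mul]
      exact mul_le_of_le_one_left (norm_nonneg _) (abs_logKernel_le_one_of_two_mul_norm_lt hy)
  have hconst : IntegrableOn (fun _ : F => K) S μ := by
    exact (h.integrableOn.sub hpot).congr (.of_forall fun y => add_sub_cancel_left _ K)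
  have hS : μ S < ⊤ := by simpa [hK] using hconst
  have huniv : μ Set.univ < ⊤ := by
    rw [← Set.union_compl_self (closedBall (0 : F) (2 * ‖x‖))]
    exact measure_union_lt_top measure_closedBall_lt_top hS
  simp [measure_univ_of_isAddLeftInvariant] at huniv

end LogPotentialGrowth

section IntegrationByParts

variable {F : Type*} [NormedAddCommGroup F] [NormedSpace ℝ F] [FiniteDimensional ℝ F]
  [MeasurableSpace F] [BorelSpace F] {μ : Measure F} [μ.IsAddHaarMeasure] {w ρ : F → ℝ}

lemma integral_fderiv_mul_eq_neg (hw : ContDiff ℝ 1 w) (hρ : ContDiff ℝ 1 ρ)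
    (hc : HasCompactSupport ρ) (v : F) :
    ∫ x, fderiv ℝ w x v * ρ x ∂μ = -∫ x, w x * fderiv ℝ ρ x v ∂μ := by
  rw [integral_mul_fderiv_eq_neg_fderiv_mul_of_integrable, neg_neg]
  · exact integrable_mul_of_continuous (continuous_fderiv_apply_const hw v) hρ.continuous hc
  · exact integrable_mul_of_continuous hw.continuous (continuous_fderiv_apply_const hρ v)
      (hc.fderiv_apply ℝ v)
  · exact integrable_mul_of_continuous hw.continuous hρ.continuous hc
  · exact fun x _ => hw.differentiable one_ne_zero x
  · exact fun x _ => hρ.differentiable one_ne_zero x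

lemma integral_eulerDeriv (hρ : ContDiff ℝ 1 ρ) (hc : HasCompactSupport ρ) :
    ∫ x, eulerDeriv ρ x ∂μ = -(Module.finrank ℝ F * ∫ x, ρ x ∂μ) := by
  let b := Module.finBasis ℝ F
  let coord i : F →L[ℝ] ℝ := (b.coord i).toContinuousLinearMap
  have hexpand : ∀ x, eulerDeriv ρ x = ∑ i, coord i x * fderiv ℝ ρ x (b i) := fun x => by
    conv_lhs => rw [eulerDeriv, ← b.sum_repr x, map_sum]
    simp [coord]
  have hparts : ∀ i, ∫ x, coord i x * fderiv ℝ ρ x (b i) ∂μ = -∫ x, ρ x ∂μ := fun i => by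
    rw [← neg_eq_iff_eq_neg, ← integral_fderiv_mul_eq_neg (coord i).contDiff hρ hc]
    simp_rw [(coord i).fderiv]
    simp [coord]
  simp_rw [hexpand]
  rw [integral_finsetSum]
  · simp [hparts]
  · exact fun i _ => integrable_mul_of_continuous (coord i).continuous
      (continuous_fderiv_apply_const hρ _) (hc.fderiv_apply ℝ _)

lemma integral_eulerDeriv_mul (hw : ContDiff ℝ 1 w) (hρ : ContDiff ℝ 1 ρ)
    (hc : HasCompactSupport ρ) :
    ∫ x, eulerDeriv w x * ρ x ∂μ =
      -∫ x, w x * (Module.finrank ℝ F * ρ x + eulerDeriv ρ x) ∂μ := by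
  have hwρ : Integrable (fun x => w x * ρ x) μ :=
    integrable_mul_of_continuous hw.continuous hρ.continuous hc
  have hEwρ : Integrable (fun x => eulerDeriv w x * ρ x) μ :=
    integrable_mul_of_continuous (continuous_eulerDeriv hw) hρ.continuous hc
  have hwEρ : Integrable (fun x => w x * eulerDeriv ρ x) μ := integrable_mul_of_continuous
    hw.continuous (continuous_eulerDeriv hρ) (hasCompactSupport_eulerDeriv hc)
  have hprod := integral_eulerDeriv (μ := μ) (hw.mul hρ) hc.mul_left
  simp_rw [fun x => eulerDeriv_mul (hw.differentiable one_ne_zero x)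
    (hρ.differentiable one_ne_zero x)] at hprod
  rw [integral_add hEwρ hwEρ] at hprod
  simp_rw [mul_add, mul_left_comm (w _)]
  rw [integral_add (hwρ.const_mul _) hwEρ, integral_const_mul]
  linarith

end IntegrationByParts

section WeightedJensen

variable {X : Type*} [MeasurableSpace X] {μ : Measure X} {φ : ℝ → ℝ} {f ψ : X → ℝ}

lemma map_integral_mul_le_of_convexOn (hφ : ConvexOn ℝ Set.univ φ) (hψ : ∀ x, 0 ≤ ψ x)
    (hψ₁ : ∫ x, ψ x ∂μ = 1) (hf : Integrable (fun x => f x * ψ x) μ)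
    (hφf : Integrable (fun x => φ (f x) * ψ x) μ) :
    φ (∫ x, f x * ψ x ∂μ) ≤ ∫ x, φ (f x) * ψ x ∂μ := by
  have hψi : Integrable ψ μ := .of_integral_ne_zero (hψ₁ ▸ one_ne_zero)
  have hdens : AEMeasurable (fun x => (ψ x).toNNReal) μ := hψi.1.aemeasurable.real_toNNReal
  have hsmul : ∀ (g : X → ℝ) x, (ψ x).toNNReal • g x = g x * ψ x := fun g x => by
    rw [NNReal.smul_def, Real.coe_toNNReal _ (hψ x), smul_eq_mul, mul_comm]
  set ν : Measure X := μ.withDensity fun x => ((ψ x).toNNReal : ENNReal)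
  have : IsProbabilityMeasure ν := ⟨by
    rw [withDensity_apply _ .univ, setLIntegral_univ]
    exact (ofReal_integral_eq_lintegral_ofReal hψi (.of_forall hψ)).symm.trans (by simp [hψ₁])⟩
  have hν : ∀ g : X → ℝ, ∫ x, g x ∂ν = ∫ x, g x * ψ x ∂μ := fun g => by
    simp_rw [ν, integral_withDensity_eq_integral_smul₀ hdens, hsmul]
  have hνi : ∀ g : X → ℝ, Integrable (fun x => g x * ψ x) μ → Integrable g ν := fun g hg => by
    simpa only [ν, integrable_withDensity_iff_integrable_smul₀ hdens, hsmul] using hg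
  simpa only [hν] using hφ.map_integral_le (hφ.continuousOn isOpen_univ) isClosed_univ
    (.of_forall fun _ => Set.mem_univ _) (hνi f hf) (hνi (φ ∘ f) hφf)

end WeightedJensen

section RadialWeight

variable {F : Type*} [NormedAddCommGroup F] [MeasurableSpace F] {μ : Measure F}
  {ψ u v : F → ℝ}

/-- A radial probability density on the shell `1 ≤ ‖x‖ ≤ 2`, the weight against which functions are
averaged. It is written as a function of `‖x‖ ^ 2`, which is smooth at the origin. -/
structure IsRadialWeight (μ : Measure F) (ψ : F → ℝ) : Prop where
  exists_profile : ∃ χ : ℝ → ℝ, ContDiff ℝ 1 χ ∧ ψ = fun x => χ (‖x‖ ^ 2)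
  nonneg : ∀ x, 0 ≤ ψ x
  norm_mem_Icc : ∀ x, ψ x ≠ 0 → ‖x‖ ∈ Set.Icc 1 2
  integral_eq_one : ∫ x, ψ x ∂μ = 1

namespace IsRadialWeight

lemma continuous (hψ : IsRadialWeight μ ψ) : Continuous ψ := by
  obtain ⟨χ, hχ, rfl⟩ := hψ.exists_profile
  exact hχ.continuous.comp (continuous_norm.pow 2)

lemma integrable (hψ : IsRadialWeight μ ψ) : Integrable ψ μ :=
  .of_integral_ne_zero (hψ.integral_eq_one ▸ one_ne_zero)

variable [ProperSpace F]

lemma hasCompactSupport (hψ : IsRadialWeight μ ψ) : HasCompactSupport ψ :=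
  .of_support_subset_isCompact (isCompact_closedBall 0 2) fun x hx => by
    simpa using (hψ.norm_mem_Icc x hx).2

variable [NormedSpace ℝ F] [OpensMeasurableSpace F] [IsFiniteMeasureOnCompacts μ]

lemma integrable_comp_exp_smul_mul (hψ : IsRadialWeight μ ψ) (hu : Continuous u) (t : ℝ) :
    Integrable (fun x => u (rexp t • x) * ψ x) μ :=
  integrable_mul_of_continuous (hu.comp (continuous_const_smul _)) hψ.continuous
    hψ.hasCompactSupport

lemma dilationMean_mono (hψ : IsRadialWeight μ ψ) (hu : Continuous u) (hv : Continuous v)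
    {t : ℝ} (h : ∀ x, ‖x‖ ∈ Set.Icc 1 2 → u (rexp t • x) ≤ v (rexp t • x)) :
    dilationMean μ ψ u t ≤ dilationMean μ ψ v t := by
  refine integral_mono (hψ.integrable_comp_exp_smul_mul hu t)
    (hψ.integrable_comp_exp_smul_mul hv t) fun x => ?_
  by_cases hx : ψ x = 0
  · simp [hx]
  · exact mul_le_mul_of_nonneg_right (h x (hψ.norm_mem_Icc x hx)) (hψ.nonneg x)

lemma map_dilationMean_le {φ : ℝ → ℝ} (hψ : IsRadialWeight μ ψ) (hφ : ConvexOn ℝ Set.univ φ)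
    (hu : Continuous u) (t : ℝ) :
    φ (dilationMean μ ψ u t) ≤ dilationMean μ ψ (fun x => φ (u x)) t :=
  map_integral_mul_le_of_convexOn hφ hψ.nonneg hψ.integral_eq_one
    (hψ.integrable_comp_exp_smul_mul hu t)
    (hψ.integrable_comp_exp_smul_mul
      ((continuousOn_univ.1 (hφ.continuousOn isOpen_univ)).comp hu) t)

end IsRadialWeight

lemma exists_isRadialWeight [NormedSpace ℝ F] [FiniteDimensional ℝ F] [Nontrivial F]
    [BorelSpace F] (μ : Measure F) [μ.IsAddHaarMeasure] :
    ∃ ψ : F → ℝ, IsRadialWeight μ ψ := by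
  let χ : ContDiffBump (5 / 2 : ℝ) := ⟨1 / 2, 3 / 2, by norm_num, by norm_num⟩
  have hsupport : ∀ r : ℝ, 0 ≤ r → χ (r ^ 2) ≠ 0 → r ∈ Set.Icc 1 2 := fun r hr h => by
    have hmem : r ^ 2 ∈ ball (5 / 2 : ℝ) (3 / 2) := χ.support_eq ▸ h
    rw [mem_ball, Real.dist_eq, abs_lt] at hmem
    constructor <;> nlinarith
  set g : F → ℝ := fun x => χ (‖x‖ ^ 2) with hg
  have hgcont : Continuous g := χ.continuous.comp (continuous_norm.pow 2)
  have hgc : HasCompactSupport g :=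
    .of_support_subset_isCompact (isCompact_closedBall 0 2) fun x hx => by
      simpa using (hsupport _ (norm_nonneg x) hx).2
  have hgpos : 0 < ∫ x, g x ∂μ := by
    obtain ⟨x, hx⟩ := exists_norm_eq F (Real.sqrt_nonneg (5 / 2))
    refine hgcont.integral_pos_of_hasCompactSupport_nonneg_nonzero hgc (fun _ => χ.nonneg)
      (x := x) ?_
    simp only [hg]
    rw [hx, Real.sq_sqrt (by norm_num), χ.one_of_mem_closedBall (by simp [χ])]
    exact one_ne_zero
  refine ⟨fun x => (∫ x, g x ∂μ)⁻¹ * g x, ⟨fun s => (∫ x, g x ∂μ)⁻¹ * χ s,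
    contDiff_const.mul χ.contDiff, rfl⟩, fun x => mul_nonneg (inv_nonneg.2 hgpos.le) χ.nonneg,
    fun x hx => hsupport _ (norm_nonneg x) (right_ne_zero_of_mul hx), ?_⟩
  rw [integral_const_mul, inv_mul_cancel₀ hgpos.ne']

end RadialWeight

section RadialDerivative

variable {F : Type*} [NormedAddCommGroup F] [InnerProductSpace ℝ F] {χ : ℝ → ℝ}

lemma fderiv_comp_norm_sq_apply (hχ : Differentiable ℝ χ) (x v : F) :
    fderiv ℝ (fun y : F => χ (‖y‖ ^ 2)) x v = 2 * inner ℝ x v * deriv χ (‖x‖ ^ 2) := by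
  have h : HasFDerivAt (fun y : F => χ (‖y‖ ^ 2)) (deriv χ (‖x‖ ^ 2) • (2 • innerSL ℝ x)) x :=
    (hχ (‖x‖ ^ 2)).hasDerivAt.comp_hasFDerivAt (f := fun y : F => ‖y‖ ^ 2) x
      (hasStrictFDerivAt_norm_sq x).hasFDerivAt
  simp [h.fderiv, mul_comm]

lemma fderiv_norm_sq_mul_comp_norm_sq_apply (hχ : Differentiable ℝ χ) (x v : F) :
    fderiv ℝ (fun y : F => ‖y‖ ^ 2 * χ (‖y‖ ^ 2)) x v =
      inner ℝ x v * (2 * χ (‖x‖ ^ 2) + eulerDeriv (fun y : F => χ (‖y‖ ^ 2)) x) := by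
  rw [fderiv_comp_norm_sq_apply (χ := fun s => s * χ s) (differentiable_fun_id.fun_mul hχ),
    eulerDeriv, fderiv_comp_norm_sq_apply hχ, real_inner_self_eq_norm_sq,
    deriv_fun_mul differentiableAt_fun_id (hχ _)]
  simp only [one_mul, deriv_id'']
  ring

end RadialDerivative

section Laplacian

variable {n : ℕ} {u w φ : E n → ℝ}

lemma continuous_lap (hu : ContDiff ℝ 2 u) : Continuous (lap u) :=
  continuous_finsetSum _ fun _ _ =>
    continuous_fderiv_apply_const (contDiff_fderiv_apply_const hu one_add_one_eq_two.le _) _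

lemma lap_comp_smul (hu : ContDiff ℝ 2 u) (c : ℝ) (x : E n) :
    lap (fun y => u (c • y)) x = c ^ 2 * lap u (c • x) := by
  rw [lap, lap, Finset.mul_sum]
  refine Finset.sum_congr rfl fun i _ => ?_
  have hdiff := (contDiff_fderiv_apply_const hu one_add_one_eq_two.le
    (EuclideanSpace.single i 1)).differentiable one_ne_zero
  simp_rw [fderiv_comp_smul, smul_apply, smul_eq_mul]
  have hdiff_smul : DifferentiableAt ℝ
      (fun y => fderiv ℝ u (c • y) (EuclideanSpace.single i 1)) x :=
    (hdiff _).comp x (differentiableAt_id.const_smul c)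
  rw [fderiv_const_mul hdiff_smul,
    fderiv_comp_smul (f := fun y => fderiv ℝ u y (EuclideanSpace.single i 1))]
  simp [sq, mul_assoc]

lemma integral_lap_mul (hw : ContDiff ℝ 2 w) (hφ : ContDiff ℝ 1 φ) (hc : HasCompactSupport φ) :
    ∫ x, lap w x * φ x = -∫ x, ∑ i, fderiv ℝ w x (EuclideanSpace.single i 1) *
      fderiv ℝ φ x (EuclideanSpace.single i 1) := by
  have hderiv := contDiff_fderiv_apply_const hw one_add_one_eq_two.le
  simp_rw [lap, Finset.sum_mul]
  rw [integral_finsetSum, integral_finsetSum, ← Finset.sum_neg_distrib]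
  · exact Finset.sum_congr rfl fun i _ =>
      integral_fderiv_mul_eq_neg (hderiv _) hφ hc _
  · exact fun i _ => integrable_mul_of_continuous (hderiv _).continuous
      (continuous_fderiv_apply_const hφ _) (hc.fderiv_apply ℝ _)
  · exact fun i _ => integrable_mul_of_continuous
      (continuous_fderiv_apply_const (hderiv _) _) hφ.continuous hc

lemma eulerDeriv_eq_sum (x : E n) :
    eulerDeriv w x = ∑ i, x i * fderiv ℝ w x (EuclideanSpace.single i 1) := by
  simpa [eulerDeriv] using
    congrArg (fderiv ℝ w x) ((EuclideanSpace.basisFun (Fin n) ℝ).sum_repr x).symm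

-- In polar coordinates `|x|² Δ` is `(r ∂/∂r)² + (n - 2) r ∂/∂r` plus the spherical Laplacian, whose
-- contribution has mean zero.
lemma integral_lap_mul_norm_sq_mul_comp_norm_sq {χ : ℝ → ℝ} (hw : ContDiff ℝ 2 w)
    (hχ : ContDiff ℝ 1 χ) (hc : HasCompactSupport fun x : E n => χ (‖x‖ ^ 2)) :
    ∫ x, lap w x * (‖x‖ ^ 2 * χ (‖x‖ ^ 2)) =
      (∫ x, eulerDeriv (eulerDeriv w) x * χ (‖x‖ ^ 2)) +
        (n - 2) * ∫ x, eulerDeriv w x * χ (‖x‖ ^ 2) := by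
  set ψ : E n → ℝ := fun x => χ (‖x‖ ^ 2)
  have hψ : ContDiff ℝ 1 ψ := hχ.comp (contDiff_norm_sq ℝ)
  have hEw : ContDiff ℝ 1 (eulerDeriv w) := contDiff_eulerDeriv hw (by norm_num)
  have hi₁ : Integrable fun x => eulerDeriv w x * ψ x :=
    integrable_mul_of_continuous hEw.continuous hψ.continuous hc
  have hi₂ : Integrable fun x => eulerDeriv w x * eulerDeriv ψ x :=
    integrable_mul_of_continuous hEw.continuous (continuous_eulerDeriv hψ)
      (hasCompactSupport_eulerDeriv hc)
  have hgreen : ∫ x, lap w x * (‖x‖ ^ 2 * ψ x) =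
      -∫ x, (2 * (eulerDeriv w x * ψ x) + eulerDeriv w x * eulerDeriv ψ x) := by
    rw [integral_lap_mul hw ((contDiff_norm_sq ℝ).mul hψ) hc.mul_left]
    refine congrArg Neg.neg (integral_congr_ae (.of_forall fun x => ?_))
    simp only [ψ, fderiv_norm_sq_mul_comp_norm_sq_apply (hχ.differentiable one_ne_zero)]
    rw [eulerDeriv_eq_sum (w := w), Finset.sum_mul, Finset.mul_sum, Finset.sum_mul,
      ← Finset.sum_add_distrib]
    refine Finset.sum_congr rfl fun i _ => ?_
    simp only [EuclideanSpace.inner_single_right, Real.ringHom_apply, one_mul]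
    ring
  have hparts := integral_eulerDeriv_mul (μ := volume) hEw hψ hc
  simp_rw [mul_add, mul_left_comm _ (Module.finrank ℝ (E n) : ℝ)] at hparts
  rw [integral_add (hi₁.const_mul _) hi₂, integral_const_mul, finrank_euclideanSpace_fin]
    at hparts
  rw [hgreen, hparts, integral_add (hi₁.const_mul 2) hi₂, integral_const_mul]
  ring

lemma dilationMean_norm_sq_mul_lap {ψ : E n → ℝ} (hψ : IsRadialWeight volume ψ)
    (hu : ContDiff ℝ 2 u) (t : ℝ) :
    dilationMean volume ψ (fun x => ‖x‖ ^ 2 * lap u x) t =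
      dilationMean volume ψ (eulerDeriv (eulerDeriv u)) t +
        (n - 2) * dilationMean volume ψ (eulerDeriv u) t := by
  obtain ⟨χ, hχ, rfl⟩ := hψ.exists_profile
  have hdil : ContDiff ℝ 2 fun x => u (rexp t • x) := hu.comp (contDiff_const_smul _)
  have hmean := integral_lap_mul_norm_sq_mul_comp_norm_sq hdil hχ hψ.hasCompactSupport
  have hE : eulerDeriv (fun y => u (rexp t • y)) = fun x => eulerDeriv u (rexp t • x) :=
    funext (eulerDeriv_comp_smul u _)
  simp_rw [hE, eulerDeriv_comp_smul (eulerDeriv u), lap_comp_smul hu] at hmean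
  unfold dilationMean
  rw [← hmean]
  refine integral_congr_ae (.of_forall fun x => ?_)
  simp only [norm_smul, mul_pow, Real.norm_eq_abs, sq_abs]
  ring

end Laplacian

section ScalarCurvature

variable {n : ℕ} {u : E n → ℝ} {x : E n}

lemma norm_sq_mul_lap_le_of_le_Rg (hn : 2 ≤ n) {c : ℝ} (h : c ≤ Rg n u x) :
    ‖x‖ ^ 2 * lap u x ≤
      -((n - 2) / 2 * eulerDeriv u x ^ 2) - c / (2 * (n - 1)) * ‖x‖ ^ 2 * rexp (2 * u x) := by
  have hn₂ : (2 : ℝ) ≤ n := by exact_mod_cast hn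
  have hn₁ : (0 : ℝ) < 2 * (n - 1) := by linarith
  have hradial : eulerDeriv u x ^ 2 ≤ ‖x‖ ^ 2 * ‖gradient u x‖ ^ 2 := by
    have hnorm : ‖gradient u x‖ = ‖fderiv ℝ u x‖ := by simp [gradient]
    rw [hnorm, ← mul_pow, ← sq_abs, mul_comm]
    gcongr
    exact (fderiv ℝ u x).le_opNorm x
  have hlap : c / (2 * (n - 1)) * rexp (2 * u x) ≤
      -lap u x - (n - 2) / 2 * ‖gradient u x‖ ^ 2 := by
    rw [Rg, neg_mul, Real.exp_neg] at h
    rw [div_mul_eq_mul_div, div_le_iff₀ hn₁, ← le_div_iff₀ (Real.exp_pos _)]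
    exact h.trans_eq (by ring)
  have hcoef : (0 : ℝ) ≤ (n - 2) / 2 := by linarith
  linarith [mul_le_mul_of_nonneg_left hlap (sq_nonneg ‖x‖),
    mul_le_mul_of_nonneg_left hradial hcoef]

lemma Rg_eq_zero_of_eventuallyEq_const {K : ℝ} (h : u =ᶠ[𝓝 x] fun _ => K) : Rg n u x = 0 := by
  have hfderiv : fderiv ℝ u =ᶠ[𝓝 x] 0 := by simpa using h.fderiv (𝕜 := ℝ)
  have hlap : lap u x = 0 := Finset.sum_eq_zero fun i _ => by
    have : (fun y => fderiv ℝ u y (EuclideanSpace.single i 1)) =ᶠ[𝓝 x] fun _ => (0 : ℝ) :=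
      hfderiv.mono fun y hy => by simp [hy]
    simp [this.fderiv_eq]
  simp [Rg, hlap, gradient, hfderiv.eq_of_nhds]

lemma exists_ne_zero_and_ne_of_le_Rg [Nontrivial (E n)] {C p : ℝ} (hC : 0 < C)
    (hR : ∀ᶠ x in cobounded (E n), C * ‖x‖ ^ (-p) ≤ Rg n u x) (K : ℝ) :
    ∃ y ≠ 0, u y ≠ K := by
  obtain ⟨x, hRx, hx⟩ := (hR.and (eventually_ne_cobounded 0)).exists
  by_contra! hconst
  have hpos : 0 < Rg n u x :=
    (mul_pos hC (Real.rpow_pos_of_pos (norm_pos_iff.2 hx) _)).trans_le hRx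
  exact hpos.ne' (Rg_eq_zero_of_eventuallyEq_const ((eventually_ne_nhds hx).mono hconst))

end ScalarCurvature

section RiccatiForMeans

variable {n : ℕ} {u ψ : E n → ℝ} {t : ℝ}

lemma dilationMean_norm_sq_mul_lap_le (hψ : IsRadialWeight volume ψ) (hu : ContDiff ℝ 2 u)
    {k c q : ℝ} (hk : 0 ≤ k) (hc : 0 ≤ c)
    (h : ∀ x : E n, ‖x‖ ∈ Set.Icc 1 2 → ‖rexp t • x‖ ^ 2 * lap u (rexp t • x) ≤
      -(k * eulerDeriv u (rexp t • x) ^ 2) - c * rexp (q * u (rexp t • x))) :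
    dilationMean volume ψ (fun x => ‖x‖ ^ 2 * lap u x) t ≤
      -(k * dilationMean volume ψ (eulerDeriv u) t ^ 2) -
        c * rexp (q * dilationMean volume ψ u t) := by
  have hlap := continuous_lap hu
  have hE := continuous_eulerDeriv (hu.of_le one_le_two)
  have hu₀ := hu.continuous
  have hsq := hψ.map_dilationMean_le even_two.convexOn_pow hE t
  have hexp := hψ.map_dilationMean_le (φ := fun s => rexp (q * s))
    (convexOn_exp.comp_linearMap (LinearMap.mul ℝ ℝ q)) hu₀ t
  have hisq := hψ.integrable_comp_exp_smul_mul (u := fun x => eulerDeriv u x ^ 2) (hE.pow 2) t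
  have hiexp := hψ.integrable_comp_exp_smul_mul (u := fun x => rexp (q * u x)) (by fun_prop) t
  calc dilationMean volume ψ (fun x => ‖x‖ ^ 2 * lap u x) t
      ≤ dilationMean volume ψ
          (fun x => -(k * eulerDeriv u x ^ 2) - c * rexp (q * u x)) t :=
        hψ.dilationMean_mono (by fun_prop) (by fun_prop) h
    _ = -(k * dilationMean volume ψ (fun x => eulerDeriv u x ^ 2) t) -
          c * dilationMean volume ψ (fun x => rexp (q * u x)) t := by
        simp_rw [dilationMean, sub_mul, neg_mul, mul_assoc]
        rw [integral_sub (hisq.const_mul k).fun_neg (hiexp.const_mul c), integral_neg,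
          integral_const_mul, integral_const_mul]
    _ ≤ _ := by gcongr

lemma min_mul_exp_le_norm_exp_smul_rpow {F : Type*} [NormedAddCommGroup F] [NormedSpace ℝ F]
    {x : F} (hx : ‖x‖ ∈ Set.Icc 1 2) (a t : ℝ) :
    min 1 (2 ^ a) * rexp (a * t) ≤ ‖rexp t • x‖ ^ a := by
  have hshell : min 1 (2 ^ a) ≤ ‖x‖ ^ a := by
    rcases le_total 0 a with ha | ha
    · exact (min_le_left _ _).trans (Real.one_le_rpow hx.1 ha)
    · exact (min_le_right _ _).trans
        (Real.rpow_le_rpow_of_nonpos (one_pos.trans_le hx.1) hx.2 ha)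
  rw [norm_smul, Real.norm_of_nonneg (Real.exp_pos t).le,
    Real.mul_rpow (Real.exp_pos t).le (norm_nonneg x), ← Real.exp_mul, mul_comm t,
    mul_comm (rexp _)]
  gcongr

lemma dilationMean_riccati_le (hn : 2 ≤ n) (hψ : IsRadialWeight volume ψ) (hu : ContDiff ℝ 2 u)
    {C p : ℝ} (hC : 0 ≤ C)
    (hR : ∀ x : E n, 1 ≤ ‖x‖ → C * ‖rexp t • x‖ ^ (-p) ≤ Rg n u (rexp t • x)) :
    dilationMean volume ψ (eulerDeriv (eulerDeriv u)) t +
        (n - 2) * dilationMean volume ψ (eulerDeriv u) t +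
        (n - 2) / 2 * dilationMean volume ψ (eulerDeriv u) t ^ 2 +
        C / (2 * (n - 1)) * min 1 (2 ^ (2 - p)) *
          rexp (2 * dilationMean volume ψ u t + (2 - p) * t) ≤ 0 := by
  have hn₂ : (2 : ℝ) ≤ n := by exact_mod_cast hn
  have hcoef : 0 ≤ C / (2 * ((n : ℝ) - 1)) := div_nonneg hC (by linarith)
  have hpoint : ∀ x : E n, ‖x‖ ∈ Set.Icc 1 2 → ‖rexp t • x‖ ^ 2 * lap u (rexp t • x) ≤
      -((n - 2) / 2 * eulerDeriv u (rexp t • x) ^ 2) -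
        C / (2 * (n - 1)) * min 1 (2 ^ (2 - p)) * rexp ((2 - p) * t) *
          rexp (2 * u (rexp t • x)) := fun x hx => by
    refine (norm_sq_mul_lap_le_of_le_Rg hn (hR x hx.1)).trans (sub_le_sub_left ?_ _)
    have hX : 0 < ‖rexp t • x‖ := by
      rw [norm_smul]
      exact mul_pos (norm_pos_iff.2 (Real.exp_ne_zero t)) (one_pos.trans_le hx.1)
    have hpow : ‖rexp t • x‖ ^ (2 - p) = ‖rexp t • x‖ ^ (-p) * ‖rexp t • x‖ ^ 2 := by
      rw [← Real.rpow_add_natCast hX.ne']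
      congr 1
      push_cast
      ring
    have hmin := min_mul_exp_le_norm_exp_smul_rpow hx (2 - p) t
    calc C / (2 * (n - 1)) * min 1 (2 ^ (2 - p)) * rexp ((2 - p) * t) * rexp (2 * u (rexp t • x))
        = C / (2 * (n - 1)) * (min 1 (2 ^ (2 - p)) * rexp ((2 - p) * t)) *
            rexp (2 * u (rexp t • x)) := by ring
      _ ≤ C / (2 * (n - 1)) * ‖rexp t • x‖ ^ (2 - p) * rexp (2 * u (rexp t • x)) := by gcongr
      _ = _ := by rw [hpow]; ring
  have hmean := dilationMean_norm_sq_mul_lap_le hψ hu (by linarith) (by positivity) hpoint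
  rw [dilationMean_norm_sq_mul_lap hψ hu] at hmean
  rw [Real.exp_add]
  linarith

end RiccatiForMeans

section TotalMass

variable {n : ℕ} {u f : E n → ℝ} {K : ℝ}

lemma tendsto_dilationMean_div [Nontrivial (E n)] {ψ : E n → ℝ} (hψ : IsRadialWeight volume ψ)
    (hu : Continuous u) (hf : Integrable f) (hlog : Integrable fun y => log⁺ ‖y‖⁻¹ * f y)
    (hpot : ∀ x, u x = logPotential volume f x + K) :
    Tendsto (fun t => dilationMean volume ψ u t / t) atTop (𝓝 (-∫ y, f y)) := by
  have hpotc : Continuous (logPotential volume f) :=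
    (hu.sub continuous_const).congr fun x => sub_eq_of_eq_add (hpot x)
  have hmean : ∀ t, dilationMean volume ψ u t =
      dilationMean volume ψ (logPotential volume f) t + K := fun t => by
    simp_rw [dilationMean, hpot, add_mul]
    rw [integral_add (hψ.integrable_comp_exp_smul_mul hpotc t) (hψ.integrable.const_mul K),
      integral_const_mul, hψ.integral_eq_one, mul_one]
  have hlim := tendsto_dilationMean_logPotential_div hψ.continuous hψ.hasCompactSupport hf hlog
  simp_rw [hmean, add_div]
  simpa [hψ.integral_eq_one] using
    hlim.add ((tendsto_const_nhds (x := K)).div_atTop tendsto_id)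

lemma integral_mem_Icc_of_le_Rg (hn : 3 ≤ n) (hu : ContDiff ℝ 2 u) (hf : Integrable f)
    (hpot : ∀ x, u x = logPotential volume f x + K) {C p : ℝ} (hC : 0 < C)
    (hR : ∀ᶠ x in cobounded (E n), C * ‖x‖ ^ (-p) ≤ Rg n u x) :
    ∫ y, f y ∈ Set.Icc (max 0 (1 - p / 2)) 2 := by
  have hn₃ : (3 : ℝ) ≤ n := by exact_mod_cast hn
  have : Nonempty (Fin n) := ⟨⟨0, by omega⟩⟩
  obtain ⟨ψ, hψ⟩ := exists_isRadialWeight (F := E n) volume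
  have hlog : Integrable fun y => log⁺ ‖y‖⁻¹ * f y := by
    obtain ⟨y, hy, huy⟩ := exists_ne_zero_and_ne_of_le_Rg hC hR K
    refine integrable_posLog_inv_norm_mul_of_logKernel hf hy ?_
    by_contra hundef
    exact huy (by rw [hpot, logPotential, integral_undef hundef, zero_add])
  have hderiv : ∀ v : E n → ℝ, ContDiff ℝ 1 v → ∀ t, HasDerivAt (dilationMean volume ψ v)
      (dilationMean volume ψ (eulerDeriv v) t) t := fun v hv =>
    hasDerivAt_dilationMean hv hψ.continuous hψ.hasCompactSupport
  have hc : 0 < C / (2 * ((n : ℝ) - 1)) * min 1 (2 ^ (2 - p)) :=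
    mul_pos (div_pos hC (by linarith)) (lt_min one_pos (by positivity))
  have hriccati := (eventually_forall_exp_smul hR).mono fun t ht =>
    dilationMean_riccati_le (by omega) hψ hu hC.le ht
  obtain ⟨hnonneg, hle, hge⟩ := nonneg_and_le_and_le_of_riccati_le (by linarith) (by linarith) hc
    (hderiv u (hu.of_le one_le_two))
    (hderiv (eulerDeriv u) (contDiff_eulerDeriv hu one_add_one_eq_two.le)) hriccati
    (tendsto_dilationMean_div hψ hu.continuous hf hlog hpot)
  refine ⟨max_le hnonneg (by linarith), hle.trans_eq ?_⟩
  have : (n : ℝ) - 2 ≠ 0 := by linarith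
  field_simp

end TotalMass

-- `IsNormal` adds its constant inside the integral over the infinite measure space `ℝⁿ`. A nonzero
-- constant makes the integrand non-integrable, and the integral then has the junk value `0`.
lemma IsNormal.eq_const_mul_logPotential {n : ℕ} [Nontrivial (E n)] {u Q : E n → ℝ}
    (h : IsNormal n u Q) (hint : Integrable fun y => Q y * rexp (n * u y)) {y : E n}
    (hy : u y ≠ 0) (x : E n) :
    u x = 2 / (Nat.factorial (n - 1) * sphereVol n) *
      logPotential volume (fun y => Q y * rexp (n * u y)) x := by
  obtain ⟨K, hK⟩ := h
  replace hK : ∀ x, u x = 2 / (Nat.factorial (n - 1) * sphereVol n) *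
    ∫ y, (logKernel x y * (Q y * rexp (n * u y)) + K) := hK
  obtain rfl : K = 0 := by
    by_contra hne
    refine hy ((hK y).trans ?_)
    rw [integral_undef (not_integrable_logKernel_mul_add_const hint y hne), mul_zero]
  simpa only [add_zero, logPotential] using hK x

theorem stmt_9_general {n : ℕ} (hn : 3 ≤ n) {u Q : E n → ℝ} (hu : ContDiff ℝ 2 u)
    (hint : Integrable fun y => Q y * rexp (n * u y)) {K : ℝ}
    (hpot : ∀ x, u x = 2 / (Nat.factorial (n - 1) * sphereVol n) *
      logPotential volume (fun y => Q y * rexp (n * u y)) x + K)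
    {C p : ℝ} (hC : 0 < C) (hR : ∀ᶠ x in cobounded (E n), C * ‖x‖ ^ (-p) ≤ Rg n u x) :
    Nat.factorial (n - 1) * sphereVol n / 2 * max 0 (1 - p / 2) ≤ ∫ x, Q x * rexp (n * u x) ∧
      ∫ x, Q x * rexp (n * u x) ≤ Nat.factorial (n - 1) * sphereVol n := by
  have : Nonempty (Fin n) := ⟨⟨0, by omega⟩⟩
  set c : ℝ := Nat.factorial (n - 1) * sphereVol n
  have hc : 0 < c := by
    obtain ⟨y, -, hy⟩ := exists_ne_zero_and_ne_of_le_Rg hC hR K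
    refine lt_of_le_of_ne (mul_nonneg (Nat.cast_nonneg _) ENNReal.toReal_nonneg) fun hzero => ?_
    exact hy (by rw [hpot, ← hzero, div_zero, zero_mul, zero_add])
  simp_rw [← logPotential_const_mul] at hpot
  obtain ⟨hge, hle⟩ := integral_mem_Icc_of_le_Rg hn hu (hint.const_mul (2 / c)) hpot hC hR
  rw [integral_const_mul, div_mul_eq_mul_div] at hge hle
  rw [le_div_iff₀ hc] at hge
  rw [div_le_iff₀ hc] at hle
  constructor <;> linarith

/-- if `R_g(x) ≥ C|x|^{−p}` near infinity then
`((n−1)!|𝕊ⁿ|/2)·max{0,1−p/2} ≤ ∫ Q e^{nu} ≤ (n−1)!|𝕊ⁿ|`. -/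
theorem stmt_9 (n : ℕ) (hn : 4 ≤ n) (hne : Even n)
    (u Q : E n → ℝ) (hu : ContDiff ℝ (⊤ : ℕ∞) u)
    (hint : Integrable (fun y => Q y * Real.exp (n * u y)))
    (hnorm : IsNormal n u Q)
    (C p : ℝ) (hC : 0 < C) (hp : -2 ≤ p)
    (hR : ∃ R : ℝ, 0 < R ∧ ∀ x : E n, R ≤ ‖x‖ → C * ‖x‖ ^ (-p) ≤ Rg n u x) :
    (Nat.factorial (n - 1) * sphereVol n) / 2 * max 0 (1 - p / 2) ≤
        ∫ x, Q x * Real.exp (n * u x) ∧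
      ∫ x, Q x * Real.exp (n * u x) ≤ Nat.factorial (n - 1) * sphereVol n := by
  obtain ⟨R, -, hR⟩ := hR
  have hR' : ∀ᶠ x in cobounded (E n), C * ‖x‖ ^ (-p) ≤ Rg n u x :=
    hasBasis_cobounded_norm.eventually_iff.2 ⟨R, trivial, fun x hx => hR x hx⟩
  have : Nonempty (Fin n) := ⟨⟨0, by omega⟩⟩
  obtain ⟨y, -, hy⟩ := exists_ne_zero_and_ne_of_le_Rg hC hR' 0
  exact stmt_9_general (K := 0) (by omega) (contDiff_infty.1 hu 2) hint
    (fun x => by rw [add_zero, ← hnorm.eq_const_mul_logPotential hint hy]) hC hR'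
end
end
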